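/- Let m and p be positive integers, set l = 4mp−1, t = 4mp−2p−1 and p' = 2mp−1, let N be a positive integer, and let q be a nonzero complex number with (q;q)_{N−1} ≠ 0. Then, with a(n), b₁(n), b₂(n), X(n) as defined in the context (all exponents of q occurring are integers), Σ_{N−1 ≥ n_{p'} ≥ ⋯ ≥ n_1 ≥ 0} q^{a(n)N + b₁(n) + b₂(n)} X(n) = q^{1−N} Σ_{N−1 ≥ n_{2mp−1} ≥ ⋯ ≥ n_1 ≥ 0} (q^{1−N};q)_{n_{2mp−1}} (−1)^{n_{2mp−1}} q^{−n_{2mp−1}(n_{2mp−1}+1)/2} · ∏_{1 ≤ i < j ≤ 2mp−1, m ∤ i} q^{ε_{i,j,m} n_i n_j} · ∏_{i=1}^{2p−1} (−1)^{n_{mi}} q^{(−1)^i N n_{mi} + n_{mi}(n_{mi}+1)/2} · ∏_{i=1}^{2mp−2} q^{−n_i n_{i+1} + γ_{i,m} n_i} [n_{i+1}; n_i]_q. -/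

import Mathlib

open Finset

noncomputable section

/-- The q-Pochhammer symbol `(a; q)_n = ∏_{k=0}^{n-1} (1 - a q^k)`. -/
def qPoch (a q : ℂ) (n : ℕ) : ℂ := ∏ k ∈ Finset.range n, (1 - a * q ^ k)

/-- The Gaussian binomial coefficient `[n; k]_q` as a polynomial in `q` over `ℤ`,
defined by the q-Pascal rule `[n; k] = [n-1; k-1] + q^k [n-1; k]`.  It is the
polynomial equal to `(q;q)_n / ((q;q)_{n-k} (q;q)_k)`. -/
def gaussPoly : ℕ → ℕ → Polynomial ℤ
  | _, 0 => 1
  | 0, _ + 1 => 0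
  | n + 1, k + 1 => gaussPoly n k + Polynomial.X ^ (k + 1) * gaussPoly n (k + 1)

/-- The Gaussian binomial coefficient `[n; k]_q` evaluated at `q : ℂ`. -/
def gbin (q : ℂ) (n k : ℕ) : ℂ := Polynomial.aeval q (gaussPoly n k)

/-- `σ_j = (-1)^⌊(2j-1)t/l⌋`. -/
def sigmaT (l t j : ℕ) : ℤ := (-1) ^ ((2 * j - 1) * t / l)

/-- `r(j)`: the unique integer with `r(j) ≡ (2j-1)t (mod 2l)` and `-l < r(j) < l`. -/
def rT (l t j : ℕ) : ℤ :=
  if (((2 * j - 1) * t % (2 * l) : ℕ) : ℤ) < (l : ℤ) then (((2 * j - 1) * t % (2 * l) : ℕ) : ℤ)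
  else (((2 * j - 1) * t % (2 * l) : ℕ) : ℤ) - 2 * (l : ℤ)

/-- `r'(j) = (|r(j)| + 1)/2`. -/
def rpT (l t j : ℕ) : ℕ := ((rT l t j).natAbs + 1) / 2

open Classical in
/-- `i_k`: the unique `j ∈ {1, …, (l-1)/2}` with `r'(j) = k`. -/
def iT (l t k : ℕ) : ℕ :=
  if h : ∃ j, j ∈ Finset.Icc 1 ((l - 1) / 2) ∧ rpT l t j = k then h.choose else 0

/-- `ε_{i,j,m}`: `1` if `j ≡ -i, -i-1 (mod 2m)`, `-1` if `j ≡ i, i-1 (mod 2m)`,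
`0` otherwise (and `0` when `m ∣ i`, a case excluded in all uses). -/
def epsLO (m i j : ℕ) : ℤ :=
  if m ∣ i then 0
  else if 2 * m ∣ (i + j) ∨ 2 * m ∣ (i + j + 1) then 1
  else if (2 * (m : ℤ)) ∣ ((j : ℤ) - (i : ℤ)) ∨ (2 * (m : ℤ)) ∣ ((j : ℤ) - (i : ℤ) + 1) then -1
  else 0

/-- `Δ_{i,j,m}`: `1` if `j ≡ -i, -i+1 (mod 2m)`, `-1` if `j ≡ i, i+1 (mod 2m)`,
`0` otherwise (and `0` when `m ∣ i`, a case excluded in all uses). -/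
def deltaLO (m i j : ℕ) : ℤ :=
  if m ∣ i then 0
  else if 2 * m ∣ (i + j) ∨ 2 * m ∣ (i + j - 1) then 1
  else if (2 * (m : ℤ)) ∣ ((j : ℤ) - (i : ℤ)) ∨ (2 * (m : ℤ)) ∣ ((j : ℤ) - (i : ℤ) - 1) then -1
  else 0

/-- `γ_{i,m} = 1` if `i ≡ 1, …, m-1 (mod 2m)` and `-1` otherwise. -/
def gamLO (m i : ℕ) : ℤ :=
  if 1 ≤ i % (2 * m) ∧ i % (2 * m) ≤ m - 1 then 1 else -1

/-- `β_{i,m} = 1` if `i ≡ 1, …, m-1 (mod 2m)`, `-1` if `i ≡ m+1, …, 2m-1 (mod 2m)`,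
and `0` if `m ∣ i`. -/
def betLO (m i : ℕ) : ℤ :=
  if 1 ≤ i % (2 * m) ∧ i % (2 * m) ≤ m - 1 then 1
  else if m + 1 ≤ i % (2 * m) ∧ i % (2 * m) ≤ 2 * m - 1 then -1
  else 0

/-- Extend a tuple `f : Fin P → Fin N` to `n : ℕ → ℕ` with `n i = f (i-1)` for
`1 ≤ i ≤ P` and `n i = 0` otherwise (in particular `n 0 = 0`). -/
def extTup (P N : ℕ) (f : Fin P → Fin N) : ℕ → ℕ :=
  fun i => if h : 1 ≤ i ∧ i ≤ P then (f ⟨i - 1, by omega⟩ : ℕ) else 0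

/-- Takata's exponent `a(n)` (an integer; every integer division below is exact). -/
def aT (l t : ℕ) (n : ℕ → ℕ) : ℤ :=
  -(∑ j ∈ Icc 1 ((l - 1) / 2), (∑ k ∈ Icc (rpT l t j) ((l - 1) / 2),
      (sigmaT l t (iT l t k) + sigmaT l t (iT l t ((l - 1) / 2 + 1 - k))) / 2) *
      ((n j : ℤ) - (n (j - 1) : ℤ)))
  - ∑ j ∈ Icc 1 ((l - 1) / 2 - 1), ((sigmaT l t (j + 1) + sigmaT l t ((l - 1) / 2 + 1 - j)) / 2) * (n j : ℤ)
  - ((sigmaT l t ((l - 1) / 2) + 1) / 2) * (n ((l - 1) / 2) : ℤ)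
  - ∑ j ∈ Icc 1 ((l - 1) / 2), sigmaT l t j

/-- Takata's exponent `b₁(n)` (an integer; every integer division below is exact
whenever the factor it multiplies is nonzero). -/
def b1T (l t : ℕ) (n : ℕ → ℕ) : ℤ :=
  -aT l t n
  + ∑ k ∈ Icc 1 ((l - t) / 2), ((1 - sigmaT l t (iT l t k)) / 2) * (n (iT l t k - 1) : ℤ)
  - ∑ k ∈ Icc ((l - t) / 2 + 1) ((l - 1) / 2), (n (iT l t k - 1) : ℤ)
  + ∑ k ∈ Icc ((l - t) / 2 + 1) ((l - 1) / 2), ((1 + sigmaT l t (iT l t k)) / 2) * (n (iT l t k) : ℤ)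
  - (1 + sigmaT l t ((l - 1) / 2)) * (n ((l - 1) / 2) : ℤ)
  + ∑ j ∈ Icc 1 ((l - 1) / 2 - 1), ((sigmaT l t (j + 1) - sigmaT l t j) / 2) * (n j : ℤ)
  - ∑ k ∈ Icc 1 ((l - 1) / 2 - 1), ∑ k' ∈ Icc (k + 1) ((l - 1) / 2),
      ((1 + Int.sign ((iT l t k : ℤ) - (iT l t k' : ℤ))) / 2) *
        ((sigmaT l t (iT l t k) - sigmaT l t (iT l t k')) / 2) *
        ((n (iT l t k) : ℤ) - (n (iT l t k - 1) : ℤ)) *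
        ((n (iT l t k') : ℤ) - (n (iT l t k' - 1) : ℤ))
  + ∑ j ∈ Icc 1 ((l - 1) / 2), sigmaT l t j *
      (∑ k ∈ Icc 1 (rpT l t j), ((n (iT l t k) : ℤ) - (n (iT l t k - 1) : ℤ))) * (n (j - 1) : ℤ)

/-- Takata's exponent `b₂(n)`. -/
def b2T (l t : ℕ) (n : ℕ → ℕ) : ℤ :=
  if l < 2 * t then
    ∑ k ∈ Icc ((l - t) / 2 + 1) ((t - 1) / 2),
      ((1 + sigmaT l t (iT l t k)) / 2) * (n (iT l t k - 1) : ℤ)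
  else
    -∑ k ∈ Icc ((t + 1) / 2 + 1) ((l - t) / 2),
      ((1 + sigmaT l t (iT l t k)) / 2) * (n (iT l t k - 1) : ℤ)

/-- Takata's `κ(p')`. -/
def kapT (l t N : ℕ) (n : ℕ → ℕ) : ℤ :=
  if sigmaT l t ((l - 1) / 2) = -1 then -(N : ℤ) * (n ((l - 1) / 2) : ℤ) else 0

/-- Takata's `τ(j)`. -/
def tauT (l t : ℕ) (q : ℂ) (n : ℕ → ℕ) (j : ℕ) : ℂ :=
  if sigmaT l t j = -1 then (-1 : ℂ) ^ (n j - n (j - 1))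
  else q ^ ((((n j : ℤ) - (n (j - 1) : ℤ)) * (((n j : ℤ) - (n (j - 1) : ℤ)) + 1)) / 2)

/-- Takata's `X(n)`. -/
def XT (l t N : ℕ) (q : ℂ) (n : ℕ → ℕ) : ℂ :=
  (-1 : ℂ) ^ (n ((l - 1) / 2)) * q ^ kapT l t N n *
    (qPoch q q (N - 1) * qPoch q q (n ((l - 1) / 2)) / qPoch q q (N - n ((l - 1) / 2) - 1)) *
    ∏ j ∈ Icc 1 ((l - 1) / 2), tauT l t q n j / qPoch q q (n j - n (j - 1))

theorem takata_div_even {m p s c : ℕ} (hs : s < p) (hc : c < m) :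
    (2 * (2 * m * s + c + 1) - 1) * (4 * m * p - 2 * p - 1) =
      (4 * m * p - 1) * (2 * (2 * m * s + c - s)) + (4 * p * (m - 1 - c) + 2 * p - 1 - 2 * s) := by
  obtain ⟨d, rfl⟩ := Nat.exists_eq_add_of_lt hc
  obtain ⟨e, rfl⟩ := Nat.exists_eq_add_of_lt hs
  have h1 : 2 * (2 * (c + d + 1) * s + c + 1) - 1 = 4 * (c + d + 1) * s + 2 * c + 1 := by
    have : 2 * (2 * (c + d + 1) * s + c + 1) = (4 * (c + d + 1) * s + 2 * c + 1) + 1 := by ring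
    omega
  have h2 : 4 * (c + d + 1) * (s + e + 1) - 2 * (s + e + 1) - 1
      = 4 * (c + d) * (s + e + 1) + 2 * (s + e) + 1 := by
    have : 4 * (c + d + 1) * (s + e + 1)
        = (4 * (c + d) * (s + e + 1) + 2 * (s + e) + 1) + (2 * (s + e + 1) + 1) := by ring
    omega
  have h3 : 4 * (c + d + 1) * (s + e + 1) - 1 = 4 * (c + d) * (s + e + 1) + 4 * (s + e) + 3 := by
    have : 4 * (c + d + 1) * (s + e + 1)
        = (4 * (c + d) * (s + e + 1) + 4 * (s + e) + 3) + 1 := by ring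
    omega
  have h4 : 2 * (c + d + 1) * s + c - s = 2 * (c + d) * s + s + c := by
    have : 2 * (c + d + 1) * s + c = (2 * (c + d) * s + s + c) + s := by ring
    omega
  have h5 : 4 * (s + e + 1) * (c + d + 1 - 1 - c) + 2 * (s + e + 1) - 1 - 2 * s
      = 4 * (s + e + 1) * d + 2 * e + 1 := by
    have : c + d + 1 - 1 - c = d := by omega
    rw [this]; omega
  rw [h1, h2, h3, h4, h5]; ring

theorem takata_div_odd {m p s c : ℕ} (hs : s < p) (hc : c < m) :
    (2 * (2 * m * s + m + c + 1) - 1) * (4 * m * p - 2 * p - 1) =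
      (4 * m * p - 1) * (2 * (2 * m * s + m + c - s - 1) + 1)
        + (4 * p * (m - 1 - c) + 2 * p - 2 - 2 * s) := by
  obtain ⟨d, rfl⟩ := Nat.exists_eq_add_of_lt hc
  obtain ⟨e, rfl⟩ := Nat.exists_eq_add_of_lt hs
  have h1 : 2 * (2 * (c + d + 1) * s + (c + d + 1) + c + 1) - 1
      = 4 * (c + d + 1) * s + 2 * (c + d + 1) + 2 * c + 1 := by
    have : 2 * (2 * (c + d + 1) * s + (c + d + 1) + c + 1)
      = (4 * (c + d + 1) * s + 2 * (c + d + 1) + 2 * c + 1) + 1 := by ring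
    omega
  have h2 : 4 * (c + d + 1) * (s + e + 1) - 2 * (s + e + 1) - 1
      = 4 * (c + d) * (s + e + 1) + 2 * (s + e) + 1 := by
    have : 4 * (c + d + 1) * (s + e + 1)
        = (4 * (c + d) * (s + e + 1) + 2 * (s + e) + 1) + (2 * (s + e + 1) + 1) := by ring
    omega
  have h3 : 4 * (c + d + 1) * (s + e + 1) - 1 = 4 * (c + d) * (s + e + 1) + 4 * (s + e) + 3 := by
    have : 4 * (c + d + 1) * (s + e + 1)
        = (4 * (c + d) * (s + e + 1) + 4 * (s + e) + 3) + 1 := by ring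
    omega
  have h4 : 2 * (c + d + 1) * s + (c + d + 1) + c - s - 1 = 2 * (c + d) * s + s + 2 * c + d := by
    have : 2 * (c + d + 1) * s + (c + d + 1) + c
      = (2 * (c + d) * s + s + 2 * c + d) + s + 1 := by ring
    omega
  have h5 : 4 * (s + e + 1) * (c + d + 1 - 1 - c) + 2 * (s + e + 1) - 2 - 2 * s
      = 4 * (s + e + 1) * d + 2 * e := by
    have : c + d + 1 - 1 - c = d := by omega
    rw [this]; omega
  rw [h1, h2, h3, h4, h5]; ring

theorem takata_rem_lt {m p s c : ℕ} (hs : s < p) (hc : c < m) :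
    4 * p * (m - 1 - c) + 2 * p - 1 - 2 * s < 4 * m * p - 1 := by
  obtain ⟨d, rfl⟩ := Nat.exists_eq_add_of_lt hc
  have : c + d + 1 - 1 - c = d := by omega
  rw [this]
  have : 4 * (c + d + 1) * p = 4 * c * p + 4 * p * d + 4 * p := by ring
  omega

theorem sigmaT_even {m p s c : ℕ} (hs : s < p) (hc : c < m) :
    sigmaT (4 * m * p - 1) (4 * m * p - 2 * p - 1) (2 * m * s + c + 1) = 1 := by
  have hlt := takata_rem_lt hs hc
  rw [sigmaT, takata_div_even hs hc, Nat.mul_add_div (by omega), Nat.div_eq_of_lt hlt, add_zero]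
  exact (even_two_mul _).neg_one_pow

theorem sigmaT_odd {m p s c : ℕ} (hs : s < p) (hc : c < m) :
    sigmaT (4 * m * p - 1) (4 * m * p - 2 * p - 1) (2 * m * s + m + c + 1) = -1 := by
  have hlt := takata_rem_lt hs hc
  rw [sigmaT, takata_div_odd hs hc, Nat.mul_add_div (by omega), Nat.div_eq_of_lt (by omega),
    add_zero]
  exact (odd_two_mul_add_one _).neg_one_pow

theorem rpT_even {m p s c : ℕ} (hs : s < p) (hc : c < m) :
    rpT (4 * m * p - 1) (4 * m * p - 2 * p - 1) (2 * m * s + c + 1)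
      = 2 * p * (m - 1 - c) + (p - s) := by
  have hlt := takata_rem_lt hs hc
  set R := 4 * p * (m - 1 - c) + 2 * p - 1 - 2 * s with hR
  have hmod : (2 * (2 * m * s + c + 1) - 1) * (4 * m * p - 2 * p - 1) % (2 * (4 * m * p - 1)) = R := by
    rw [takata_div_even hs hc, ← hR,
      show (4 * m * p - 1) * (2 * (2 * m * s + c - s)) + R
        = R + (2 * (4 * m * p - 1)) * (2 * m * s + c - s) by ring,
      Nat.add_mul_mod_self_left, Nat.mod_eq_of_lt (by omega)]
  rw [rpT, rT, hmod, if_pos (by exact_mod_cast hlt), Int.natAbs_natCast]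
  have : 4 * p * (m - 1 - c) = 2 * (2 * p * (m - 1 - c)) := by ring
  omega

theorem rpT_odd {m p s c : ℕ} (hs : s < p) (hc : c < m) :
    rpT (4 * m * p - 1) (4 * m * p - 2 * p - 1) (2 * m * s + m + c + 1)
      = 2 * p * c + p + s + 1 := by
  have hlt := takata_rem_lt hs hc
  set R := 4 * p * (m - 1 - c) + 2 * p - 2 - 2 * s with hR
  have hmod : (2 * (2 * m * s + m + c + 1) - 1) * (4 * m * p - 2 * p - 1) % (2 * (4 * m * p - 1))
      = 4 * m * p - 1 + R := by
    rw [takata_div_odd hs hc, ← hR,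
      show (4 * m * p - 1) * (2 * (2 * m * s + m + c - s - 1) + 1) + R
        = (4 * m * p - 1 + R) + (2 * (4 * m * p - 1)) * (2 * m * s + m + c - s - 1) by ring,
      Nat.add_mul_mod_self_left, Nat.mod_eq_of_lt (by omega)]
  rw [rpT, rT, hmod, if_neg (by push_cast; omega)]
  have h1 : 4 * p * (m - 1 - c) + 4 * (p * c) + 4 * p = 4 * m * p := by
    obtain ⟨d, rfl⟩ := Nat.exists_eq_add_of_lt hc
    have : c + d + 1 - 1 - c = d := by omega
    rw [this]; ring
  have h2 : 2 * p * c = 2 * (p * c) := by ring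
  omega

/-- Every index in `{1, …, 2mp}` lies in one of the `2p` consecutive blocks of length `m`. -/
theorem exists_block {m p j : ℕ} (hj : j ∈ Icc 1 (2 * m * p)) :
    ∃ s < p, ∃ c < m, j = 2 * m * s + c + 1 ∨ j = 2 * m * s + m + c + 1 := by
  rw [mem_Icc] at hj
  have hm : 0 < m := by
    rcases Nat.eq_zero_or_pos m with rfl | h
    · simp at hj; omega
    · exact h
  have h1 := Nat.div_add_mod (j - 1) (2 * m)
  have h2 := Nat.mod_lt (j - 1) (show 0 < 2 * m by omega)
  have h3 : (j - 1) / (2 * m) < p := by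
    rw [Nat.div_lt_iff_lt_mul (by omega), mul_comm p]; omega
  refine ⟨_, h3, ?_⟩
  by_cases h : (j - 1) % (2 * m) < m
  · exact ⟨_, h, Or.inl (by omega)⟩
  · exact ⟨(j - 1) % (2 * m) - m, by omega, Or.inr (by omega)⟩

theorem lex_lt_iff {K a b u v : ℕ} (hu : 1 ≤ u) (huK : u ≤ K) (hv : 1 ≤ v) (hvK : v ≤ K) :
    K * a + u < K * b + v ↔ a < b ∨ (a = b ∧ u < v) := by
  rcases lt_trichotomy a b with h | rfl | h
  · obtain ⟨e, rfl⟩ := Nat.exists_eq_add_of_lt h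
    have : K * (a + e + 1) = K * a + K * e + K := by ring
    simp only [h, true_or, iff_true]; omega
  · simp
  · obtain ⟨e, rfl⟩ := Nat.exists_eq_add_of_lt h
    have : K * (b + e + 1) = K * b + K * e + K := by ring
    have h1 : ¬ (b + e + 1 < b) := by omega
    have h2 : ¬ (b + e + 1 = b) := by omega
    simp only [h1, h2, false_and, or_false, iff_false]; omega

theorem lex_le_iff {K a b u v : ℕ} (hu : 1 ≤ u) (huK : u ≤ K) (hv : 1 ≤ v) (hvK : v ≤ K) :
    K * a + u ≤ K * b + v ↔ a < b ∨ (a = b ∧ u ≤ v) := by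
  rw [← not_lt, lex_lt_iff hv hvK hu huK]; omega

theorem rpT_mem {m p j : ℕ} (hj : j ∈ Icc 1 (2 * m * p - 1)) :
    rpT (4 * m * p - 1) (4 * m * p - 2 * p - 1) j ∈ Icc 1 (2 * m * p - 1) := by
  have hj' := mem_Icc.1 hj
  obtain ⟨s, hs, c, hc, rfl | rfl⟩ := exists_block (m := m) (p := p) (j := j)
    (mem_Icc.2 ⟨hj'.1, by omega⟩)
  · rw [rpT_even hs hc, mem_Icc]
    obtain ⟨d, rfl⟩ := Nat.exists_eq_add_of_lt hc
    rw [show c + d + 1 - 1 - c = d by omega]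
    have : 2 * (c + d + 1) * p = 2 * c * p + 2 * p * d + 2 * p := by ring
    omega
  · rw [rpT_odd hs hc, mem_Icc]
    obtain ⟨d, rfl⟩ := Nat.exists_eq_add_of_lt hc
    obtain ⟨e, rfl⟩ := Nat.exists_eq_add_of_lt hs
    have h1 : 2 * (c + d + 1) * (s + e + 1)
      = 2 * (s + e + 1) * c + 2 * (d * (s + e + 1)) + 2 * (s + e + 1) := by ring
    refine ⟨by omega, ?_⟩
    rcases Nat.eq_zero_or_pos (d + e) with h | h
    · obtain ⟨rfl, rfl⟩ : d = 0 ∧ e = 0 := by omega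
      have h2 : 2 * (c + 0 + 1) * (s + 0 + 1) = 2 * (c + 0 + 1) * s + (c + 0 + 1) + c + 1 := by ring
      omega
    · have h3 : d ≤ d * (s + e + 1) := Nat.le_mul_of_pos_right _ (by omega)
      omega

theorem rpT_injOn (m p : ℕ) :
    Set.InjOn (rpT (4 * m * p - 1) (4 * m * p - 2 * p - 1)) (Icc 1 (2 * m * p) : Finset ℕ) := by
  intro i hi j hj h
  obtain ⟨s, hs, c, hc, hi'⟩ := exists_block (mem_coe.1 hi)
  obtain ⟨s', hs', c', hc', hj'⟩ := exists_block (mem_coe.1 hj)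
  have key : ∀ {a b u v : ℕ}, 1 ≤ u → u ≤ 2 * p → 1 ≤ v → v ≤ 2 * p →
      2 * p * a + u = 2 * p * b + v → a = b ∧ u = v := by
    intro a b u v h1 h2 h3 h4 h5
    have h6 := (lex_le_iff h1 h2 h3 h4).1 h5.le
    have h7 := (lex_le_iff h3 h4 h1 h2).1 h5.ge
    omega
  rcases hi' with rfl | rfl <;> rcases hj' with rfl | rfl
  · rw [rpT_even hs hc, rpT_even hs' hc'] at h
    obtain ⟨h1, h2⟩ := key (by omega) (by omega) (by omega) (by omega) h
    obtain rfl : c = c' := by omega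
    obtain rfl : s = s' := by omega
    rfl
  · rw [rpT_even hs hc, rpT_odd hs' hc', add_assoc, add_assoc] at h
    have := key (by omega) (by omega) (by omega) (by omega) h
    omega
  · rw [rpT_odd hs hc, rpT_even hs' hc', add_assoc, add_assoc] at h
    have := key (by omega) (by omega) (by omega) (by omega) h
    omega
  · rw [rpT_odd hs hc, rpT_odd hs' hc', add_assoc, add_assoc, add_assoc, add_assoc] at h
    obtain ⟨h1, h2⟩ := key (by omega) (by omega) (by omega) (by omega) h
    obtain rfl : c = c' := by omega
    obtain rfl : s = s' := by omega
    rfl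

theorem half_len (m p : ℕ) : (4 * m * p - 1 - 1) / 2 = 2 * m * p - 1 := by
  have : 4 * m * p = 2 * (2 * m * p) := by ring
  omega

theorem iT_spec {m p k : ℕ} (hk : k ∈ Icc 1 (2 * m * p - 1)) :
    iT (4 * m * p - 1) (4 * m * p - 2 * p - 1) k ∈ Icc 1 (2 * m * p - 1) ∧
      rpT (4 * m * p - 1) (4 * m * p - 2 * p - 1)
        (iT (4 * m * p - 1) (4 * m * p - 2 * p - 1) k) = k := by
  have hinj : Set.InjOn (rpT (4 * m * p - 1) (4 * m * p - 2 * p - 1))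
      (Icc 1 (2 * m * p - 1) : Finset ℕ) :=
    (rpT_injOn m p).mono (by intro j; simp only [coe_Icc, Set.mem_Icc]; omega)
  have hsurj := Finset.surjOn_of_injOn_of_card_le _ (fun j hj => rpT_mem hj) hinj le_rfl
  have hex : ∃ j, j ∈ Icc 1 ((4 * m * p - 1 - 1) / 2) ∧
      rpT (4 * m * p - 1) (4 * m * p - 2 * p - 1) j = k := by
    rw [half_len]; exact hsurj hk
  rw [iT, dif_pos hex]
  have h := hex.choose_spec
  exact ⟨mem_Icc.2 ⟨(mem_Icc.1 h.1).1, (mem_Icc.1 h.1).2.trans_eq (half_len m p)⟩, h.2⟩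

theorem iT_rpT {m p j : ℕ} (hj : j ∈ Icc 1 (2 * m * p - 1)) :
    iT (4 * m * p - 1) (4 * m * p - 2 * p - 1)
      (rpT (4 * m * p - 1) (4 * m * p - 2 * p - 1) j) = j := by
  have h := iT_spec (rpT_mem hj)
  refine rpT_injOn m p ?_ ?_ h.2
  · have := mem_Icc.1 h.1; exact mem_coe.2 (mem_Icc.2 ⟨this.1, by omega⟩)
  · have := mem_Icc.1 hj; exact mem_coe.2 (mem_Icc.2 ⟨this.1, by omega⟩)

/-- Reindexing a sum over `k` through the bijection `j ↦ r'(j)`. -/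
theorem sum_iT {m p : ℕ} (G : ℕ → ℕ → ℤ) :
    ∑ k ∈ Icc 1 (2 * m * p - 1), G k (iT (4 * m * p - 1) (4 * m * p - 2 * p - 1) k)
      = ∑ j ∈ Icc 1 (2 * m * p - 1), G (rpT (4 * m * p - 1) (4 * m * p - 2 * p - 1) j) j :=
  Finset.sum_nbij' (iT (4 * m * p - 1) (4 * m * p - 2 * p - 1))
    (rpT (4 * m * p - 1) (4 * m * p - 2 * p - 1))
    (fun _ hk => (iT_spec hk).1) (fun _ hj => rpT_mem hj)
    (fun _ hk => (iT_spec hk).2) (fun _ hj => iT_rpT hj)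
    (fun _ hk => by rw [(iT_spec hk).2])

theorem sum_range_sq_eq_triangle (F : ℕ → ℕ → ℤ) (p : ℕ) :
    ∑ s ∈ range p, ∑ s' ∈ range p, F s s'
      = ∑ s ∈ range p, (F s s + ∑ s' ∈ range s, (F s s' + F s' s)) := by
  induction p with
  | zero => simp
  | succ p ih =>
    simp only [sum_range_succ, sum_add_distrib] at ih ⊢
    linarith

/-- The contribution of a pair of blocks of the same parity. -/
theorem block_pair_same (f g : ℕ → ℤ) (M : ℕ) :
    ∑ c ∈ range (M + 1), (-(f c * g c) - g c * f (c + 1))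
      = -∑ c ∈ range M, f (c + 1) * (g (c + 1) + g c) - f 0 * g 0 - g M * f (M + 1) := by
  have h1 : ∑ c ∈ range (M + 1), f c * g c = ∑ c ∈ range M, f (c + 1) * g (c + 1) + f 0 * g 0 :=
    sum_range_succ' _ _
  have h2 : ∑ c ∈ range (M + 1), g c * f (c + 1)
      = ∑ c ∈ range M, g c * f (c + 1) + g M * f (M + 1) := sum_range_succ _ _
  have h3 : ∑ c ∈ range M, f (c + 1) * (g (c + 1) + g c)
      = ∑ c ∈ range M, f (c + 1) * g (c + 1) + ∑ c ∈ range M, g c * f (c + 1) := by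
    rw [← sum_add_distrib]; exact sum_congr rfl fun _ _ => by ring
  rw [sum_sub_distrib, sum_neg_distrib, h1, h2, h3]; ring

/-- The contribution of a pair of blocks of opposite parity. -/
theorem block_pair_opp (f g : ℕ → ℤ) (u : ℤ) (M : ℕ) :
    ∑ c ∈ range (M + 1), (f c * g (M - c) + g c * f (M - c))
        - ∑ c ∈ range (M + 1), (g (c + 1) - g c) * (u - f (M - c))
      = ∑ c ∈ range M, f (c + 1) * (g (M - c) + g (M - 1 - c))
        + f 0 * (g (M + 1) + g M) - (g (M + 1) - g 0) * u := by
  have h1 : ∑ c ∈ range (M + 1), f c * g (M - c) = ∑ c ∈ range (M + 1), g c * f (M - c) := by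
    rw [← sum_range_reflect]
    refine sum_congr rfl fun c hc => ?_
    have := mem_range.1 hc
    rw [show M + 1 - 1 - c = M - c by omega, show M - (M - c) = c by omega, mul_comm]
  have h2 : ∑ c ∈ range (M + 1), (g (c + 1) - g c) * (u - f (M - c))
      = (g (M + 1) - g 0) * u - ∑ c ∈ range (M + 1), (g (c + 1) - g c) * f (M - c) := by
    rw [← sum_range_sub g, sum_mul, ← sum_sub_distrib]
    exact sum_congr rfl fun _ _ => by ring
  have h3 : ∑ c ∈ range M, f (c + 1) * (g (M - c) + g (M - 1 - c)) + f 0 * (g (M + 1) + g M)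
      = ∑ c ∈ range (M + 1), (g (c + 1) + g c) * f (M - c) := by
    rw [← sum_range_reflect (fun c => (g (c + 1) + g c) * f (M - c)), sum_range_succ']
    congr 1
    · refine sum_congr rfl fun c hc => ?_
      have := mem_range.1 hc
      rw [show M + 1 - 1 - (c + 1) = M - 1 - c by omega,
        show M - (M - 1 - c) = c + 1 by omega, show M - 1 - c + 1 = M - c by omega]
      ring
    · simp [mul_comm]
  rw [h2, sum_add_distrib, h1, add_sub_assoc _ _ ((g (M + 1) - g 0) * u), ← add_sub_assoc, h3]
  have h4 : ∑ c ∈ range (M + 1), (g (c + 1) + g c) * f (M - c)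
      = ∑ c ∈ range (M + 1), g c * f (M - c) + ∑ c ∈ range (M + 1), g c * f (M - c)
        + ∑ c ∈ range (M + 1), (g (c + 1) - g c) * f (M - c) := by
    rw [← sum_add_distrib, ← sum_add_distrib]
    exact sum_congr rfl fun _ _ => by ring
  rw [h4]; ring

/-- The difference of the quadratic parts of the two exponents, block by block. -/
theorem block_quadratic (x y : ℕ → ℕ → ℤ) (M p : ℕ) (h0 : x 0 0 = 0)
    (hxy : ∀ s, y s 0 = x s (M + 1)) (hyx : ∀ s, x (s + 1) 0 = y s (M + 1)) :
    ∑ s ∈ range p, ∑ s' ∈ range p,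
      (∑ c ∈ range (M + 1),
          (x s c * (y s' (M - c) - x s' (c + if s' < s then 1 else 0))
            - y s c * (y s' (c + if s' ≤ s then 1 else 0) - x s' (M - c)))
        - ((if s' < s then ∑ c ∈ range (M + 1),
              (x s (c + 1) - x s c) * (y s' (M + 1) - y s' (M - c)) else 0)
            - (if s' ≤ s then ∑ c ∈ range (M + 1),
              (y s (c + 1) - y s c) * (x s' (M - c) - x s' 0) else 0))
        - ((if s < s' then ∑ c ∈ range M,
              (-(x s (c + 1) * (x s' (c + 1) + x s' c)) - y s (c + 1) * (y s' (c + 1) + y s' c)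
                + y s (c + 1) * (x s' (M - c) + x s' (M - 1 - c))) else 0)
            + (if s ≤ s' then ∑ c ∈ range M,
              x s (c + 1) * (y s' (M - c) + y s' (M - 1 - c)) else 0)))
      = ∑ s ∈ range p, (x s 0 ^ 2 - ∑ c ∈ range (M + 1), x s c ^ 2
          - ∑ c ∈ range (M + 1), y s c * y s (c + 1)) := by
  rw [sum_range_sq_eq_triangle]
  refine sum_congr rfl fun s _ => ?_
  have hneg : ∀ (f g : ℕ → ℤ), ∑ c ∈ range (M + 1), (g (c + 1) - g c) * (f (M - c) - f 0)
      = -∑ c ∈ range (M + 1), (g (c + 1) - g c) * (f 0 - f (M - c)) := by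
    intro f g
    rw [← sum_neg_distrib]; exact sum_congr rfl fun _ _ => by ring
  refine (congrArg (_ + ·) (sum_congr rfl
    (g := fun s' => (x s' 0 - x (s' + 1) 0) * (y s M + y s 0 - x s 0)) fun s' hs' => ?_)).trans ?_
  · have hlt := mem_range.1 hs'
    have e1 := block_pair_same (x s') (x s) M
    have e2 := block_pair_same (y s') (y s) M
    have e3 := block_pair_opp (y s') (x s) (y s' (M + 1)) M
    have e4 := block_pair_opp (x s') (y s) (x s' 0) M
    simp only [hlt, hlt.le, hlt.not_gt, hlt.not_ge, if_true, if_false, add_zero]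
    rw [hneg]
    simp only [mul_sub, mul_add, sum_add_distrib, sum_sub_distrib, sum_neg_distrib, sub_mul,
      neg_add, hyx, hxy] at e1 e2 e3 e4 ⊢
    linarith
  · have e4 := block_pair_opp (x s) (y s) (x s 0) M
    rw [← sum_mul, sum_range_sub', h0]
    simp only [lt_irrefl, le_refl, if_true, if_false, add_zero]
    rw [hneg]
    simp only [mul_sub, mul_add, sum_add_distrib, sum_sub_distrib, sub_mul, pow_two] at e4 ⊢
    linarith

theorem sum_range_blocks (m p : ℕ) (F : ℕ → ℤ) :
    ∑ i ∈ range (2 * m * p), F i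
      = ∑ s ∈ range p, ∑ c ∈ range m, (F (2 * m * s + c) + F (2 * m * s + m + c)) := by
  induction p with
  | zero => simp
  | succ p ih =>
    rw [sum_range_succ, ← ih, show 2 * m * (p + 1) = 2 * m * p + (m + m) by ring,
      sum_range_add, sum_range_add, sum_add_distrib]
    simp only [add_assoc]

theorem sum_Icc_one_eq_sum_range (P : ℕ) (F : ℕ → ℤ) :
    ∑ j ∈ Icc 1 P, F j = ∑ i ∈ range P, F (i + 1) := by
  rw [range_eq_Ico, sum_Ico_add' F 0 P 1]
  rfl

theorem sum_Icc_blocks (m p : ℕ) (F : ℕ → ℤ) :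
    ∑ j ∈ Icc 1 (2 * m * p), F j
      = ∑ s ∈ range p, ∑ c ∈ range m, (F (2 * m * s + c + 1) + F (2 * m * s + m + c + 1)) := by
  rw [sum_Icc_one_eq_sum_range, sum_range_blocks]

theorem sum_Icc_pred {L : ℕ} (hL : 0 < L) (F : ℕ → ℤ) :
    ∑ j ∈ Icc 1 (L - 1), F j = ∑ j ∈ Icc 1 L, F j - F L := by
  obtain ⟨K, rfl⟩ := Nat.exists_eq_add_of_lt hL
  simp [sum_Icc_succ_top]

theorem sum_Icc_eq_sum_range {L : ℕ} (hL : 0 < L) (F : ℕ → ℤ) (h0 : F 0 = 0) :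
    ∑ j ∈ Icc 1 (L - 1), F j = ∑ i ∈ range L, F i := by
  obtain ⟨K, rfl⟩ := Nat.exists_eq_add_of_lt hL
  rw [sum_Icc_one_eq_sum_range, sum_range_succ', h0]
  simp

theorem sum_range_ite_ge_sub (f : ℕ → ℤ) {a m : ℕ} (ha : a ≤ m) :
    ∑ c ∈ range m, (if a ≤ c then f (c + 1) - f c else 0) = f m - f a := by
  induction m, ha using Nat.le_induction with
  | base =>
    rw [sub_self]
    exact sum_eq_zero fun c hc => if_neg (by have := mem_range.1 hc; omega)
  | succ m h ih => rw [sum_range_succ, ih, if_pos h]; ring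

theorem sum_range_ite_lt_sub (f : ℕ → ℤ) {a m : ℕ} (ha : a ≤ m) :
    ∑ c ∈ range m, (if c < a then f (c + 1) - f c else 0) = f a - f 0 := by
  have h := sum_range_sub f m
  have h2 := sum_range_ite_ge_sub f ha
  have : ∑ c ∈ range m, (if c < a then f (c + 1) - f c else 0)
      + ∑ c ∈ range m, (if a ≤ c then f (c + 1) - f c else 0)
      = ∑ c ∈ range m, (f (c + 1) - f c) := by
    rw [← sum_add_distrib]
    refine sum_congr rfl fun c _ => ?_
    by_cases hc : c < a
    · simp [hc]
    · simp [hc, not_lt.1 hc]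
  linarith

/-- The values at the right ends of the odd blocks are those at the left ends of the even ones. -/
theorem sum_block_ends {m p : ℕ} (n : ℕ → ℤ) (hp : 0 < p) (h0 : n 0 = 0) (hL : n (2 * m * p) = 0) :
    ∑ s ∈ range p, n (2 * m * s + m + m) = ∑ s ∈ range p, n (2 * m * s) := by
  obtain ⟨K, rfl⟩ := Nat.exists_eq_add_of_lt hp
  have h : ∀ s, 2 * m * s + m + m = 2 * m * (s + 1) := fun s => by ring
  simp only [h]
  rw [zero_add] at *
  rw [sum_range_succ, sum_range_succ' (fun s => n (2 * m * s)), hL]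
  simp [h0]

theorem rpT_even_le_even {m p s c s' c' : ℕ} (hs : s < p) (hc : c < m) (hs' : s' < p)
    (hc' : c' < m) :
    rpT (4 * m * p - 1) (4 * m * p - 2 * p - 1) (2 * m * s' + c' + 1) ≤
      rpT (4 * m * p - 1) (4 * m * p - 2 * p - 1) (2 * m * s + c + 1)
      ↔ c + (if s' < s then 1 else 0) ≤ c' := by
  rw [rpT_even hs hc, rpT_even hs' hc', lex_le_iff (by omega) (by omega) (by omega) (by omega)]
  split_ifs <;> omega

theorem rpT_odd_le_odd {m p s c s' c' : ℕ} (hs : s < p) (hc : c < m) (hs' : s' < p)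
    (hc' : c' < m) :
    rpT (4 * m * p - 1) (4 * m * p - 2 * p - 1) (2 * m * s' + m + c' + 1) ≤
      rpT (4 * m * p - 1) (4 * m * p - 2 * p - 1) (2 * m * s + m + c + 1)
      ↔ c' < c + (if s' ≤ s then 1 else 0) := by
  rw [rpT_odd hs hc, rpT_odd hs' hc', add_assoc, add_assoc, add_assoc (2 * p * c),
    add_assoc (2 * p * c), lex_le_iff (by omega) (by omega) (by omega) (by omega)]
  split_ifs <;> omega

theorem rpT_odd_le_even {m p s c s' c' : ℕ} (hs : s < p) (hc : c < m) (hs' : s' < p)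
    (hc' : c' < m) :
    rpT (4 * m * p - 1) (4 * m * p - 2 * p - 1) (2 * m * s' + m + c' + 1) ≤
      rpT (4 * m * p - 1) (4 * m * p - 2 * p - 1) (2 * m * s + c + 1)
      ↔ c' < m - 1 - c := by
  rw [rpT_even hs hc, rpT_odd hs' hc', add_assoc, add_assoc,
    lex_le_iff (by omega) (by omega) (by omega) (by omega)]
  omega

theorem rpT_even_le_odd {m p s c s' c' : ℕ} (hs : s < p) (hc : c < m) (hs' : s' < p)
    (hc' : c' < m) :
    rpT (4 * m * p - 1) (4 * m * p - 2 * p - 1) (2 * m * s' + c' + 1) ≤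
      rpT (4 * m * p - 1) (4 * m * p - 2 * p - 1) (2 * m * s + m + c + 1)
      ↔ m - 1 - c ≤ c' := by
  rw [rpT_odd hs hc, rpT_even hs' hc', add_assoc, add_assoc,
    lex_le_iff (by omega) (by omega) (by omega) (by omega)]
  omega

theorem rank_sum_even {m p s c : ℕ} (hs : s < p) (hc : c < m) (n : ℕ → ℤ) :
    ∑ i ∈ Icc 1 (2 * m * p),
        (if rpT (4 * m * p - 1) (4 * m * p - 2 * p - 1) i ≤
          rpT (4 * m * p - 1) (4 * m * p - 2 * p - 1) (2 * m * s + c + 1)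
          then n i - n (i - 1) else 0)
      = ∑ s' ∈ range p, (n (2 * m * s' + m + (m - 1 - c))
          - n (2 * m * s' + (c + if s' < s then 1 else 0))) := by
  rw [sum_Icc_blocks]
  refine sum_congr rfl fun s' hs' => ?_
  rw [mem_range] at hs'
  have h1 : c + (if s' < s then 1 else 0) ≤ m := by split_ifs <;> omega
  have e1 := sum_range_ite_ge_sub (fun c => n (2 * m * s' + c)) h1
  have e2 := sum_range_ite_lt_sub (fun c => n (2 * m * s' + m + c)) (show m - 1 - c ≤ m by omega)
  rw [sum_add_distrib]
  have h2 : ∀ c' ∈ range m, _ := fun c' hc' => rpT_even_le_even hs hc hs' (mem_range.1 hc')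
  have h3 : ∀ c' ∈ range m, _ := fun c' hc' => rpT_odd_le_even hs hc hs' (mem_range.1 hc')
  rw [sum_congr rfl fun c' hc' => if_congr (h2 c' hc') rfl rfl,
    sum_congr rfl fun c' hc' => if_congr (h3 c' hc') rfl rfl]
  simp only [Nat.add_sub_cancel, ← add_assoc, add_zero] at e1 e2 ⊢
  rw [e1, e2]
  ring

theorem rank_sum_odd {m p s c : ℕ} (hs : s < p) (hc : c < m) (n : ℕ → ℤ) :
    ∑ i ∈ Icc 1 (2 * m * p),
        (if rpT (4 * m * p - 1) (4 * m * p - 2 * p - 1) i ≤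
          rpT (4 * m * p - 1) (4 * m * p - 2 * p - 1) (2 * m * s + m + c + 1)
          then n i - n (i - 1) else 0)
      = ∑ s' ∈ range p, (n (2 * m * s' + m + (c + if s' ≤ s then 1 else 0))
          - n (2 * m * s' + (m - 1 - c))) := by
  rw [sum_Icc_blocks]
  refine sum_congr rfl fun s' hs' => ?_
  rw [mem_range] at hs'
  have h1 : c + (if s' ≤ s then 1 else 0) ≤ m := by split_ifs <;> omega
  have e1 := sum_range_ite_lt_sub (fun c => n (2 * m * s' + m + c)) h1
  have e2 := sum_range_ite_ge_sub (fun c => n (2 * m * s' + c)) (show m - 1 - c ≤ m by omega)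
  rw [sum_add_distrib]
  have h2 : ∀ c' ∈ range m, _ := fun c' hc' => rpT_even_le_odd hs hc hs' (mem_range.1 hc')
  have h3 : ∀ c' ∈ range m, _ := fun c' hc' => rpT_odd_le_odd hs hc hs' (mem_range.1 hc')
  rw [sum_congr rfl fun c' hc' => if_congr (h2 c' hc') rfl rfl,
    sum_congr rfl fun c' hc' => if_congr (h3 c' hc') rfl rfl]
  simp only [Nat.add_sub_cancel, ← add_assoc, add_zero] at e1 e2 ⊢
  rw [e1, e2]
  ring

theorem rpT_top {m p : ℕ} (hm : 0 < m) (hp : 0 < p) :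
    rpT (4 * m * p - 1) (4 * m * p - 2 * p - 1) (2 * m * p) = 2 * m * p := by
  have h := rpT_odd (m := m) (p := p) (s := p - 1) (c := m - 1) (by omega) (by omega)
  obtain ⟨a, rfl⟩ := Nat.exists_eq_add_of_lt hm
  obtain ⟨b, rfl⟩ := Nat.exists_eq_add_of_lt hp
  rw [show 2 * (0 + a + 1) * (0 + b + 1 - 1) + (0 + a + 1) + (0 + a + 1 - 1) + 1
    = 2 * (0 + a + 1) * (0 + b + 1) by simp; ring] at h
  rw [h]; simp; ring

theorem rpT_le_top {m p i : ℕ} (hi : i ∈ Icc 1 (2 * m * p)) :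
    rpT (4 * m * p - 1) (4 * m * p - 2 * p - 1) i ≤ 2 * m * p := by
  have hi' := mem_Icc.1 hi
  have hm : 0 < m := Nat.pos_of_ne_zero (by rintro rfl; simp at hi'; omega)
  have hp : 0 < p := Nat.pos_of_ne_zero (by rintro rfl; simp at hi'; omega)
  rcases Nat.lt_or_ge i (2 * m * p) with h | h
  · have := mem_Icc.1 (rpT_mem (m := m) (p := p) (j := i) (mem_Icc.2 ⟨hi'.1, by omega⟩))
    omega
  · obtain rfl : i = 2 * m * p := by omega
    exact (rpT_top hm hp).le

theorem sum_iT_le_rpT {m p j : ℕ} (hm : 0 < m) (hp : 0 < p) (hj : j ∈ Icc 1 (2 * m * p - 1))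
    (D : ℕ → ℤ) :
    ∑ k ∈ Icc 1 (rpT (4 * m * p - 1) (4 * m * p - 2 * p - 1) j),
        D (iT (4 * m * p - 1) (4 * m * p - 2 * p - 1) k)
      = ∑ i ∈ Icc 1 (2 * m * p), (if rpT (4 * m * p - 1) (4 * m * p - 2 * p - 1) i ≤
          rpT (4 * m * p - 1) (4 * m * p - 2 * p - 1) j then D i else 0) := by
  have hL : 0 < 2 * m * p := by positivity
  have hr := mem_Icc.1 (rpT_mem hj)
  have h := sum_iT (m := m) (p := p) fun k i =>
    if k ≤ rpT (4 * m * p - 1) (4 * m * p - 2 * p - 1) j then D i else 0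
  rw [sum_Icc_pred hL (fun i => if rpT (4 * m * p - 1) (4 * m * p - 2 * p - 1) i ≤
          rpT (4 * m * p - 1) (4 * m * p - 2 * p - 1) j then D i else 0), rpT_top hm hp,
    if_neg (by omega), sub_zero] at h
  rw [← h, ← sum_filter]
  refine sum_congr ?_ fun _ _ => rfl
  ext k; simp only [mem_Icc, mem_filter]; omega

/-- The last quadratic sum in `b₁`, written over blocks. -/
theorem rank_quadratic {m p : ℕ} (hm : 0 < m) (hp : 0 < p) (n : ℕ → ℤ) (h0 : n 0 = 0)
    (hL0 : n (2 * m * p) = 0) :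
    ∑ j ∈ Icc 1 (2 * m * p - 1), sigmaT (4 * m * p - 1) (4 * m * p - 2 * p - 1) j *
      (∑ k ∈ Icc 1 (rpT (4 * m * p - 1) (4 * m * p - 2 * p - 1) j),
        (n (iT (4 * m * p - 1) (4 * m * p - 2 * p - 1) k)
          - n (iT (4 * m * p - 1) (4 * m * p - 2 * p - 1) k - 1))) * n (j - 1)
    = ∑ s ∈ range p, ∑ s' ∈ range p, ∑ c ∈ range m,
          (n (2 * m * s + c) * (n (2 * m * s' + m + (m - 1 - c))
              - n (2 * m * s' + (c + if s' < s then 1 else 0)))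
            - n (2 * m * s + m + c) * (n (2 * m * s' + m + (c + if s' ≤ s then 1 else 0))
              - n (2 * m * s' + (m - 1 - c)))) := by
  have hL : 0 < 2 * m * p := by positivity
  rw [sum_congr rfl fun j hj => by
    rw [sum_iT_le_rpT hm hp hj (fun i => n i - n (i - 1))]]
  have htop : ∑ i ∈ Icc 1 (2 * m * p), (if rpT (4 * m * p - 1) (4 * m * p - 2 * p - 1) i ≤
          rpT (4 * m * p - 1) (4 * m * p - 2 * p - 1) (2 * m * p)
          then n i - n (i - 1) else 0) = 0 := by
    rw [rpT_top hm hp, sum_congr rfl fun i hi => if_pos (rpT_le_top hi), sum_Icc_one_eq_sum_range]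
    simp only [Nat.add_sub_cancel]
    rw [sum_range_sub, h0, hL0, sub_zero]
  rw [sum_Icc_pred hL, htop, mul_zero, zero_mul, sub_zero, sum_Icc_blocks]
  refine sum_congr rfl fun s hs => ?_
  rw [sum_comm]
  refine sum_congr rfl fun c hc => ?_
  rw [mem_range] at hs hc
  rw [rank_sum_even hs hc, rank_sum_odd hs hc, sigmaT_even hs hc, sigmaT_odd hs hc]
  simp only [sum_sub_distrib, ← mul_sum, Nat.add_sub_cancel]
  ring

theorem half_one_add_sign (i j : ℕ) :
    (1 + Int.sign ((j : ℤ) - (i : ℤ))) / 2 = if i < j then 1 else 0 := by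
  rcases lt_trichotomy i j with h | h | h
  · rw [Int.sign_eq_one_of_pos (by omega), if_pos h]; rfl
  · subst h; simp
  · rw [Int.sign_eq_neg_one_of_neg (by omega), if_neg (by omega)]; rfl

theorem sum_Icc_lt_eq (P : ℕ) (G : ℕ → ℕ → ℤ) :
    ∑ k ∈ Icc 1 (P - 1), ∑ k' ∈ Icc (k + 1) P, G k k'
      = ∑ k ∈ Icc 1 P, ∑ k' ∈ Icc 1 P, if k < k' then G k k' else 0 := by
  have h : ∀ k ∈ Icc 1 P, ∑ k' ∈ Icc 1 P, (if k < k' then G k k' else 0)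
      = ∑ k' ∈ Icc (k + 1) P, G k k' := by
    intro k hk
    rw [← sum_filter]
    refine sum_congr ?_ fun _ _ => rfl
    ext k'; simp only [mem_Icc, mem_filter] at hk ⊢; omega
  rw [sum_congr rfl h]
  refine sum_subset (Icc_subset_Icc_right (by omega)) fun k hk hk' => ?_
  rw [Icc_eq_empty (by simp only [mem_Icc] at hk hk'; omega), sum_empty]

/-- The antisymmetric quadratic sum in `b₁`, written over blocks. -/
theorem inversion_quadratic {m p : ℕ} (hm : 0 < m) (hp : 0 < p) (n : ℕ → ℤ) :
    ∑ k ∈ Icc 1 (2 * m * p - 1 - 1), ∑ k' ∈ Icc (k + 1) (2 * m * p - 1),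
      ((1 + Int.sign ((iT (4 * m * p - 1) (4 * m * p - 2 * p - 1) k : ℤ)
          - (iT (4 * m * p - 1) (4 * m * p - 2 * p - 1) k' : ℤ))) / 2) *
        ((sigmaT (4 * m * p - 1) (4 * m * p - 2 * p - 1)
            (iT (4 * m * p - 1) (4 * m * p - 2 * p - 1) k)
          - sigmaT (4 * m * p - 1) (4 * m * p - 2 * p - 1)
            (iT (4 * m * p - 1) (4 * m * p - 2 * p - 1) k')) / 2) *
        (n (iT (4 * m * p - 1) (4 * m * p - 2 * p - 1) k)
          - n (iT (4 * m * p - 1) (4 * m * p - 2 * p - 1) k - 1)) *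
        (n (iT (4 * m * p - 1) (4 * m * p - 2 * p - 1) k')
          - n (iT (4 * m * p - 1) (4 * m * p - 2 * p - 1) k' - 1))
    = ∑ s ∈ range p, ∑ s' ∈ range p,
      ((if s' < s then ∑ c ∈ range m, (n (2 * m * s + (c + 1)) - n (2 * m * s + c)) *
            (n (2 * m * s' + m + m) - n (2 * m * s' + m + (m - 1 - c))) else 0)
        - (if s' ≤ s then ∑ c ∈ range m, (n (2 * m * s + m + (c + 1)) - n (2 * m * s + m + c)) *
            (n (2 * m * s' + (m - 1 - c)) - n (2 * m * s')) else 0)) := by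
  have hL : 0 < 2 * m * p := by positivity
  set S := sigmaT (4 * m * p - 1) (4 * m * p - 2 * p - 1) with hS
  set I := iT (4 * m * p - 1) (4 * m * p - 2 * p - 1) with hI
  set r := rpT (4 * m * p - 1) (4 * m * p - 2 * p - 1) with hr
  set D : ℕ → ℤ := fun i => n i - n (i - 1) with hD
  set H : ℕ → ℕ → ℤ := fun j i =>
    if r j < r i ∧ i < j then (S j - S i) / 2 * D j * D i else 0 with hH
  rw [sum_Icc_lt_eq]
  have step : ∑ k ∈ Icc 1 (2 * m * p - 1), ∑ k' ∈ Icc 1 (2 * m * p - 1),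
      (if k < k' then (1 + Int.sign ((I k : ℤ) - (I k' : ℤ))) / 2 * ((S (I k) - S (I k')) / 2) *
        D (I k) * D (I k') else 0)
      = ∑ j ∈ Icc 1 (2 * m * p), ∑ i ∈ Icc 1 (2 * m * p), H j i := by
    calc _ = ∑ j ∈ Icc 1 (2 * m * p - 1), ∑ k' ∈ Icc 1 (2 * m * p - 1),
          (if r j < k' then (1 + Int.sign ((j : ℤ) - (I k' : ℤ))) / 2 * ((S j - S (I k')) / 2) *
            D j * D (I k') else 0) :=
          sum_iT (m := m) (p := p) fun k j => ∑ k' ∈ Icc 1 (2 * m * p - 1),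
            (if k < k' then (1 + Int.sign ((j : ℤ) - (I k' : ℤ))) / 2 * ((S j - S (I k')) / 2) *
              D j * D (I k') else 0)
      _ = ∑ j ∈ Icc 1 (2 * m * p - 1), ∑ i ∈ Icc 1 (2 * m * p - 1),
          (if r j < r i then (1 + Int.sign ((j : ℤ) - (i : ℤ))) / 2 * ((S j - S i) / 2) *
            D j * D i else 0) :=
          sum_congr rfl fun j _ => sum_iT (m := m) (p := p) fun k' i =>
            (if r j < k' then (1 + Int.sign ((j : ℤ) - (i : ℤ))) / 2 * ((S j - S i) / 2) *
              D j * D i else 0)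
      _ = ∑ j ∈ Icc 1 (2 * m * p - 1), ∑ i ∈ Icc 1 (2 * m * p - 1), H j i := by
          refine sum_congr rfl fun j _ => sum_congr rfl fun i _ => ?_
          rw [half_one_add_sign, hH]
          by_cases h1 : r j < r i <;> by_cases h2 : i < j <;> simp [h1, h2]
      _ = ∑ j ∈ Icc 1 (2 * m * p - 1), ∑ i ∈ Icc 1 (2 * m * p), H j i := by
          refine sum_congr rfl fun j hj => ?_
          have := mem_Icc.1 hj
          rw [sum_Icc_pred hL (H j), hH]
          simp only [show ¬ (2 * m * p < j) by omega, and_false, if_false, sub_zero]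
      _ = _ := by
          rw [sum_Icc_pred hL, sub_eq_self]
          refine sum_eq_zero fun i hi => if_neg ?_
          rw [hr, rpT_top hm hp]
          have := rpT_le_top hi
          omega
  refine step.trans ?_
  rw [sum_Icc_blocks]
  refine sum_congr rfl fun s hs => ?_
  rw [mem_range] at hs
  simp only [sum_Icc_blocks m p]
  have comp : ∀ c ∈ range m, ∀ s' ∈ range p,
      ∑ c' ∈ range m, (H (2 * m * s + c + 1) (2 * m * s' + c' + 1)
        + H (2 * m * s + c + 1) (2 * m * s' + m + c' + 1))
      + ∑ c' ∈ range m, (H (2 * m * s + m + c + 1) (2 * m * s' + c' + 1)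
        + H (2 * m * s + m + c + 1) (2 * m * s' + m + c' + 1))
      = (if s' < s then (n (2 * m * s + (c + 1)) - n (2 * m * s + c)) *
            (n (2 * m * s' + m + m) - n (2 * m * s' + m + (m - 1 - c))) else 0)
        - (if s' ≤ s then (n (2 * m * s + m + (c + 1)) - n (2 * m * s + m + c)) *
            (n (2 * m * s' + (m - 1 - c)) - n (2 * m * s')) else 0) := by
    intro c hc s' hs'
    rw [mem_range] at hc hs'
    have hee : ∀ c' ∈ range m, H (2 * m * s + c + 1) (2 * m * s' + c' + 1) = 0 := by
      intro c' hc'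
      rw [mem_range] at hc'
      simp only [hH, hS, sigmaT_even hs hc, sigmaT_even hs' hc']
      simp
    have hoo : ∀ c' ∈ range m, H (2 * m * s + m + c + 1) (2 * m * s' + m + c' + 1) = 0 := by
      intro c' hc'
      rw [mem_range] at hc'
      simp only [hH, hS, sigmaT_odd hs hc, sigmaT_odd hs' hc']
      simp
    have hord : ∀ c' < m, (2 * m * s' + m + c' + 1 < 2 * m * s + c + 1 ↔ s' < s) ∧
        (2 * m * s' + c' + 1 < 2 * m * s + m + c + 1 ↔ s' ≤ s) := by
      intro c' hc'
      rcases lt_trichotomy s s' with h | rfl | h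
      · obtain ⟨e, rfl⟩ := Nat.exists_eq_add_of_lt h
        have : 2 * m * (s + e + 1) = 2 * m * s + 2 * m * e + 2 * m := by ring
        omega
      · omega
      · obtain ⟨e, rfl⟩ := Nat.exists_eq_add_of_lt h
        have : 2 * m * (s' + e + 1) = 2 * m * s' + 2 * m * e + 2 * m := by ring
        omega
    have heo : ∀ c' ∈ range m, H (2 * m * s + c + 1) (2 * m * s' + m + c' + 1)
        = if s' < s then (n (2 * m * s + (c + 1)) - n (2 * m * s + c)) *
          (if m - 1 - c ≤ c' then n (2 * m * s' + m + (c' + 1)) - n (2 * m * s' + m + c') else 0)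
          else 0 := by
      intro c' hc'
      rw [mem_range] at hc'
      have h1 := rpT_odd_le_even hs hc hs' hc'
      have h2 : r (2 * m * s + c + 1) < r (2 * m * s' + m + c' + 1) ↔ m - 1 - c ≤ c' := by
        rw [← not_le, h1, not_lt]
      simp only [hH, h2, (hord c' hc').1, hS, sigmaT_even hs hc, sigmaT_odd hs' hc', hD]
      by_cases h3 : s' < s <;> by_cases h4 : m - 1 - c ≤ c' <;> simp [h3, h4, ← add_assoc]
    have hoe : ∀ c' ∈ range m, H (2 * m * s + m + c + 1) (2 * m * s' + c' + 1)
        = -if s' ≤ s then (n (2 * m * s + m + (c + 1)) - n (2 * m * s + m + c)) *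
          (if c' < m - 1 - c then n (2 * m * s' + (c' + 1)) - n (2 * m * s' + c') else 0)
          else 0 := by
      intro c' hc'
      rw [mem_range] at hc'
      have h1 := rpT_even_le_odd hs hc hs' hc'
      have h2 : r (2 * m * s + m + c + 1) < r (2 * m * s' + c' + 1) ↔ c' < m - 1 - c := by
        rw [← not_le, h1, not_le]
      simp only [hH, h2, (hord c' hc').2, hS, sigmaT_even hs' hc', sigmaT_odd hs hc, hD]
      by_cases h3 : s' ≤ s <;> by_cases h4 : c' < m - 1 - c <;> simp [h3, h4, ← add_assoc]
      ring
    rw [sum_add_distrib, sum_add_distrib, sum_congr rfl hee, sum_congr rfl hoo,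
      sum_congr rfl heo, sum_congr rfl hoe]
    have e1 := sum_range_ite_ge_sub (fun c => n (2 * m * s' + m + c)) (show m - 1 - c ≤ m by omega)
    have e2 := sum_range_ite_lt_sub (fun c => n (2 * m * s' + c)) (show m - 1 - c ≤ m by omega)
    simp only [add_zero] at e2
    by_cases h3 : s' < s <;> by_cases h4 : s' ≤ s <;>
      simp only [h3, h4, if_true, if_false, sum_neg_distrib, ← mul_sum, e1, e2, sum_const_zero] <;>
      ring
  rw [sum_congr rfl fun c hc =>
    sum_add_distrib.symm.trans (sum_congr rfl fun s' hs' => comp c hc s' hs'), sum_comm]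
  refine sum_congr rfl fun s' _ => ?_
  rw [sum_sub_distrib]
  congr 1 <;> split_ifs <;> simp

theorem dvd_iff_eq_zero_of_lt {m : ℕ} {k w z : ℤ} (hw : w = 2 * m * k + z)
    (h1 : -(2 * (m : ℤ)) < z) (h2 : z < 2 * m) : (2 * (m : ℤ)) ∣ w ↔ z = 0 := by
  rw [hw, dvd_add_right (dvd_mul_right _ _)]
  refine ⟨fun h => Int.eq_zero_of_abs_lt_dvd h (abs_lt.2 ⟨h1, h2⟩), ?_⟩
  rintro rfl
  exact dvd_zero _

theorem natCast_dvd_two_mul {m w : ℕ} : 2 * m ∣ w ↔ (2 * (m : ℤ)) ∣ (w : ℤ) := by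
  rw [← Int.natCast_dvd_natCast]; push_cast; rfl

theorem not_dvd_block {m c : ℕ} (b : ℕ) (h0 : 0 < c) (hc : c < m) : ¬ m ∣ m * b + c := by
  rw [Nat.dvd_add_right (dvd_mul_right _ _)]
  exact Nat.not_dvd_of_pos_of_lt h0 hc

theorem epsLO_same {m b b' c c' e : ℕ} (hb : b + b' = 2 * e) (h0 : 0 < c) (hc : c < m)
    (hc' : c' < m) :
    epsLO m (m * b + c) (m * b' + c')
      = -(if c' = c then 1 else 0) - (if c' + 1 = c then 1 else 0) := by
  have hb1 : (b : ℤ) + b' = 2 * e := by exact_mod_cast hb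
  have h1 : 2 * m ∣ m * b + c + (m * b' + c') ↔ (c : ℤ) + c' = 0 := by
    rw [natCast_dvd_two_mul]
    exact dvd_iff_eq_zero_of_lt (k := e)
      (by push_cast; linear_combination (m : ℤ) * hb1) (by omega) (by omega)
  have h2 : 2 * m ∣ m * b + c + (m * b' + c') + 1 ↔ (c : ℤ) + c' + 1 = 0 := by
    rw [natCast_dvd_two_mul]
    exact dvd_iff_eq_zero_of_lt (k := e)
      (by push_cast; linear_combination (m : ℤ) * hb1) (by omega) (by omega)
  have h3 : 2 * (m : ℤ) ∣ ((m * b' + c' : ℕ) : ℤ) - ((m * b + c : ℕ) : ℤ) ↔ (c' : ℤ) - c = 0 := by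
    exact dvd_iff_eq_zero_of_lt (k := e - b)
      (by push_cast; linear_combination (m : ℤ) * hb1) (by omega) (by omega)
  have h4 : 2 * (m : ℤ) ∣ ((m * b' + c' : ℕ) : ℤ) - ((m * b + c : ℕ) : ℤ) + 1 ↔ (c' : ℤ) - c + 1 = 0 := by
    exact dvd_iff_eq_zero_of_lt (k := e - b)
      (by push_cast; linear_combination (m : ℤ) * hb1) (by omega) (by omega)
  rw [epsLO, if_neg (not_dvd_block _ h0 hc)]
  simp only [h1, h2, h3, h4]
  split_ifs <;> omega

theorem epsLO_opp {m b b' c c' e : ℕ} (hb : b + b' = 2 * e + 1) (h0 : 0 < c) (hc : c < m)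
    (hc' : c' < m) :
    epsLO m (m * b + c) (m * b' + c')
      = (if c' = m - c then 1 else 0) + (if c' = m - 1 - c then 1 else 0) := by
  have hb1 : (b : ℤ) + b' = 2 * e + 1 := by exact_mod_cast hb
  have h1 : 2 * m ∣ m * b + c + (m * b' + c') ↔ (c : ℤ) + c' - m = 0 := by
    rw [natCast_dvd_two_mul]
    exact dvd_iff_eq_zero_of_lt (k := e + 1)
      (by push_cast; linear_combination (m : ℤ) * hb1) (by omega) (by omega)
  have h2 : 2 * m ∣ m * b + c + (m * b' + c') + 1 ↔ (c : ℤ) + c' + 1 - m = 0 := by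
    rw [natCast_dvd_two_mul]
    exact dvd_iff_eq_zero_of_lt (k := e + 1)
      (by push_cast; linear_combination (m : ℤ) * hb1) (by omega) (by omega)
  have h3 : 2 * (m : ℤ) ∣ ((m * b' + c' : ℕ) : ℤ) - ((m * b + c : ℕ) : ℤ) ↔ (c' : ℤ) - c + m = 0 := by
    exact dvd_iff_eq_zero_of_lt (k := e - b)
      (by push_cast; linear_combination (m : ℤ) * hb1) (by omega) (by omega)
  have h4 : 2 * (m : ℤ) ∣ ((m * b' + c' : ℕ) : ℤ) - ((m * b + c : ℕ) : ℤ) + 1 ↔ (c' : ℤ) - c + 1 + m = 0 := by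
    exact dvd_iff_eq_zero_of_lt (k := e - b)
      (by push_cast; linear_combination (m : ℤ) * hb1) (by omega) (by omega)
  rw [epsLO, if_neg (not_dvd_block _ h0 hc)]
  simp only [h1, h2, h3, h4]
  split_ifs <;> omega

/-- The term of the `ε`-sum at `(i, j)`, extended by zero outside of `m ∤ i`, `i < j`. -/
def epsTerm (m : ℕ) (n : ℕ → ℤ) (i j : ℕ) : ℤ :=
  if ¬ m ∣ i ∧ i < j then epsLO m i j * n i * n j else 0

theorem epsTerm_block_lt_iff {m b b' c c' : ℕ} (hc : c < m) (hc' : c' < m) (h : b ≠ b') :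
    m * b + c < m * b' + c' ↔ b < b' := by
  rcases lt_or_gt_of_ne h with h | h
  · obtain ⟨e, rfl⟩ := Nat.exists_eq_add_of_lt h
    have : m * (b + e + 1) = m * b + m * e + m := by ring
    omega
  · obtain ⟨e, rfl⟩ := Nat.exists_eq_add_of_lt h
    have : m * (b' + e + 1) = m * b' + m * e + m := by ring
    omega

theorem sum_epsTerm_same {m b b' c e : ℕ} (n : ℕ → ℤ) (hb : b + b' = 2 * e) (hc : c + 1 < m) :
    ∑ c' ∈ range m, epsTerm m n (m * b + (c + 1)) (m * b' + c')
      = if b < b' then -(n (m * b + (c + 1)) * (n (m * b' + (c + 1)) + n (m * b' + c)))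
        else 0 := by
  have key : ∀ c' ∈ range m, epsTerm m n (m * b + (c + 1)) (m * b' + c')
      = (if c' = c + 1 then
          (if b < b' then -(n (m * b + (c + 1)) * n (m * b' + c')) else 0) else 0)
        + (if c' = c then
          (if b < b' then -(n (m * b + (c + 1)) * n (m * b' + c')) else 0) else 0) := by
    intro c' hc'
    rw [mem_range] at hc'
    rw [epsTerm, epsLO_same hb (by omega) hc hc']
    simp only [not_dvd_block b (Nat.succ_pos c) hc, not_false_eq_true, true_and]
    by_cases h : b = b'
    · subst h
      by_cases h1 : c' = c + 1
      · subst h1; simp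
      · by_cases h2 : c' = c
        · subst h2; simp
        · simp [h1, h2]
    · rw [if_congr (epsTerm_block_lt_iff hc hc' h) rfl rfl]
      by_cases h0 : b < b'
      · by_cases h1 : c' = c + 1
        · subst h1; simp [h0]
        · by_cases h2 : c' = c
          · subst h2; simp [h0]
          · simp [h1, h2]
      · simp [h0]
  rw [sum_congr rfl key, sum_add_distrib, sum_ite_eq', sum_ite_eq', if_pos (mem_range.2 hc),
    if_pos (mem_range.2 (by omega))]
  split_ifs <;> ring

theorem sum_epsTerm_opp {m b b' c e : ℕ} (n : ℕ → ℤ) (hb : b + b' = 2 * e + 1) (hc : c + 1 < m) :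
    ∑ c' ∈ range m, epsTerm m n (m * b + (c + 1)) (m * b' + c')
      = if b < b' then n (m * b + (c + 1)) *
          (n (m * b' + (m - (c + 1))) + n (m * b' + (m - 1 - (c + 1)))) else 0 := by
  have key : ∀ c' ∈ range m, epsTerm m n (m * b + (c + 1)) (m * b' + c')
      = (if c' = m - (c + 1) then
          (if b < b' then n (m * b + (c + 1)) * n (m * b' + c') else 0) else 0)
        + (if c' = m - 1 - (c + 1) then
          (if b < b' then n (m * b + (c + 1)) * n (m * b' + c') else 0) else 0) := by
    intro c' hc'
    rw [mem_range] at hc'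
    rw [epsTerm, epsLO_opp hb (by omega) hc hc']
    simp only [not_dvd_block b (Nat.succ_pos c) hc, not_false_eq_true, true_and]
    rw [if_congr (epsTerm_block_lt_iff hc hc' (by omega)) rfl rfl]
    split_ifs <;> ring
  rw [sum_congr rfl key, sum_add_distrib, sum_ite_eq', sum_ite_eq',
    if_pos (mem_range.2 (by omega)), if_pos (mem_range.2 (by omega))]
  split_ifs <;> ring

theorem epsTerm_of_dvd {m i : ℕ} (n : ℕ → ℤ) (j : ℕ) (h : m ∣ i) : epsTerm m n i j = 0 := by
  simp [epsTerm, h]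

/-- The `ε`-sum, written over blocks. -/
theorem eps_quadratic {M p : ℕ} (hp : 0 < p) (n : ℕ → ℤ) :
    ∑ i ∈ (Icc 1 (2 * (M + 1) * p - 1)).filter (fun i => ¬ (M + 1) ∣ i),
      ∑ j ∈ Icc (i + 1) (2 * (M + 1) * p - 1), epsLO (M + 1) i j * n i * n j
    = ∑ s ∈ range p, ∑ s' ∈ range p,
      ((if s < s' then ∑ c ∈ range M,
        (-(n (2 * (M + 1) * s + (c + 1)) *
            (n (2 * (M + 1) * s' + (c + 1)) + n (2 * (M + 1) * s' + c)))
          - n (2 * (M + 1) * s + (M + 1) + (c + 1)) *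
            (n (2 * (M + 1) * s' + (M + 1) + (c + 1)) + n (2 * (M + 1) * s' + (M + 1) + c))
          + n (2 * (M + 1) * s + (M + 1) + (c + 1)) *
            (n (2 * (M + 1) * s' + (M - c)) + n (2 * (M + 1) * s' + (M - 1 - c)))) else 0)
        + (if s ≤ s' then ∑ c ∈ range M, n (2 * (M + 1) * s + (c + 1)) *
            (n (2 * (M + 1) * s' + (M + 1) + (M - c))
              + n (2 * (M + 1) * s' + (M + 1) + (M - 1 - c))) else 0)) := by
  set m := M + 1 with hm
  have hL : 0 < 2 * m * p := by positivity
  have step : ∑ i ∈ (Icc 1 (2 * m * p - 1)).filter (fun i => ¬ m ∣ i),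
      ∑ j ∈ Icc (i + 1) (2 * m * p - 1), epsLO m i j * n i * n j
      = ∑ i ∈ range (2 * m * p), ∑ j ∈ range (2 * m * p), epsTerm m n i j := by
    rw [← sum_Icc_eq_sum_range hL _ (sum_eq_zero fun j _ => epsTerm_of_dvd n j (dvd_zero m)),
      sum_filter]
    refine sum_congr rfl fun i hi => ?_
    by_cases h : m ∣ i
    · rw [if_neg (not_not.2 h)]
      exact (sum_eq_zero fun j _ => epsTerm_of_dvd n j h).symm
    · simp only [epsTerm, h, not_false_eq_true, true_and, if_true]
      rw [← sum_filter]
      refine sum_congr ?_ fun _ _ => rfl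
      ext j; simp only [mem_Icc, mem_filter, mem_range] at hi ⊢; omega
  rw [step, sum_range_blocks]
  refine sum_congr rfl fun s _ => ?_
  simp only [sum_range_blocks m p, ← sum_add_distrib]
  rw [sum_comm]
  refine sum_congr rfl fun s' _ => ?_
  have e2 : ∀ s c, m * (2 * s) + m + c = m * (2 * s + 1) + c := fun s c => by ring
  have e3 : ∀ s, 2 * m * s = m * (2 * s) := fun s => by ring
  simp only [e3, sum_add_distrib]
  simp only [e2]
  have red : ∀ b b', ∑ c ∈ range m, ∑ c' ∈ range m, epsTerm m n (m * b + c) (m * b' + c')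
      = ∑ c ∈ range M, ∑ c' ∈ range m, epsTerm m n (m * b + (c + 1)) (m * b' + c') := by
    intro b b'
    rw [hm, sum_range_succ', ← hm, sum_eq_zero (s := range m) fun c' _ => epsTerm_of_dvd n _ (by simp), add_zero]
  have same : ∀ b b' e, b + b' = 2 * e →
      ∑ c ∈ range m, ∑ c' ∈ range m, epsTerm m n (m * b + c) (m * b' + c')
      = if b < b' then ∑ c ∈ range M,
          -(n (m * b + (c + 1)) * (n (m * b' + (c + 1)) + n (m * b' + c))) else 0 := by
    intro b b' e hb
    rw [red, sum_congr rfl fun c hc =>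
      sum_epsTerm_same n hb (by have := mem_range.1 hc; omega)]
    split_ifs <;> simp
  have opp : ∀ b b' e, b + b' = 2 * e + 1 →
      ∑ c ∈ range m, ∑ c' ∈ range m, epsTerm m n (m * b + c) (m * b' + c')
      = if b < b' then ∑ c ∈ range M,
          n (m * b + (c + 1)) * (n (m * b' + (M - c)) + n (m * b' + (M - 1 - c))) else 0 := by
    intro b b' e hb
    rw [red, sum_congr rfl fun c hc =>
      sum_epsTerm_opp n hb (by have := mem_range.1 hc; omega)]
    split_ifs
    · refine sum_congr rfl fun c hc => ?_
      rw [show m - (c + 1) = M - c by omega, show m - 1 - (c + 1) = M - 1 - c by omega]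
    · simp
  rw [same (2 * s) (2 * s') (s + s') (by ring), opp (2 * s) (2 * s' + 1) (s + s') (by ring),
    opp (2 * s + 1) (2 * s') (s + s') (by ring),
    same (2 * s + 1) (2 * s' + 1) (s + s' + 1) (by ring),
    if_congr (show 2 * s < 2 * s' ↔ s < s' by omega) rfl rfl,
    if_congr (show 2 * s < 2 * s' + 1 ↔ s ≤ s' by omega) rfl rfl,
    if_congr (show 2 * s + 1 < 2 * s' ↔ s < s' by omega) rfl rfl,
    if_congr (show 2 * s + 1 < 2 * s' + 1 ↔ s < s' by omega) rfl rfl]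
  by_cases h : s < s' <;> by_cases h' : s ≤ s' <;>
    simp only [h, h', if_true, if_false, sum_sub_distrib, sum_neg_distrib] <;> ring

/-- The sign of the block of length `m` that contains `j`, blocks alternating from `+1`. -/
def blockSign (m j : ℕ) : ℤ := if (j - 1) % (2 * m) < m then 1 else -1

theorem blockSign_even {m b : ℕ} (a : ℕ) (hb : b < m) : blockSign m (2 * m * a + b + 1) = 1 := by
  rw [blockSign, Nat.add_sub_cancel, Nat.mul_add_mod, Nat.mod_eq_of_lt (by omega), if_pos hb]

theorem blockSign_odd {m b : ℕ} (a : ℕ) (hb : b < m) :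
    blockSign m (2 * m * a + m + b + 1) = -1 := by
  rw [blockSign, Nat.add_sub_cancel, add_assoc, Nat.mul_add_mod, Nat.mod_eq_of_lt (by omega),
    if_neg (by omega)]

theorem blockSign_reflect {m p j : ℕ} (hj : j < 2 * m * p) :
    blockSign m (2 * m * p - j) = -blockSign m (j + 1) := by
  have hm : 0 < 2 * m := Nat.pos_of_mul_pos_right (by omega : 0 < 2 * m * p)
  obtain ⟨a, b, hb, rfl⟩ : ∃ a b, b < 2 * m ∧ j = 2 * m * a + b :=
    ⟨j / (2 * m), j % (2 * m), Nat.mod_lt _ hm, (Nat.div_add_mod _ _).symm⟩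
  have ha : a < p := by
    by_contra h
    have := Nat.mul_le_mul_left (2 * m) (not_lt.1 h)
    omega
  obtain ⟨e, rfl⟩ := Nat.exists_eq_add_of_lt ha
  have h1 : 2 * m * (a + e + 1) - (2 * m * a + b) = 2 * m * e + (2 * m - b) := by
    have : 2 * m * (a + e + 1) = 2 * m * a + 2 * m * e + 2 * m := by ring
    omega
  rw [h1]
  by_cases h : b < m
  · rw [show 2 * m * e + (2 * m - b) = 2 * m * e + m + (m - 1 - b) + 1 by omega,
      blockSign_odd e (by omega), blockSign_even a h]
  · rw [show 2 * m * e + (2 * m - b) = 2 * m * e + (2 * m - 1 - b) + 1 by omega,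
      show 2 * m * a + b + 1 = 2 * m * a + m + (b - m) + 1 by omega,
      blockSign_even e (by omega), blockSign_odd a (by omega), neg_neg]

theorem blockSign_two_mul {m p : ℕ} (hm : 0 < m) (hp : 0 < p) :
    blockSign m (2 * m * p) = -1 := by
  have h1 := blockSign_reflect (m := m) (p := p) (j := 0) (by positivity)
  have h2 := blockSign_even (m := m) 0 hm
  simp only [tsub_zero, zero_add, mul_zero] at h1 h2
  rw [h1, h2]

theorem sigmaT_eq_blockSign {m p j : ℕ} (hj : j ∈ Icc 1 (2 * m * p)) :
    sigmaT (4 * m * p - 1) (4 * m * p - 2 * p - 1) j = blockSign m j := by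
  obtain ⟨s, hs, c, hc, rfl | rfl⟩ := exists_block hj
  · rw [sigmaT_even hs hc, blockSign_even s hc]
  · rw [sigmaT_odd hs hc, blockSign_odd s hc]

theorem sigmaT_eq_blockSign_rpT {m p j : ℕ} (hj : j ∈ Icc 1 (2 * m * p)) :
    sigmaT (4 * m * p - 1) (4 * m * p - 2 * p - 1) j
      = blockSign p (rpT (4 * m * p - 1) (4 * m * p - 2 * p - 1) j) := by
  obtain ⟨s, hs, c, hc, rfl | rfl⟩ := exists_block hj
  · rw [sigmaT_even hs hc, rpT_even hs hc,
      show 2 * p * (m - 1 - c) + (p - s) = 2 * p * (m - 1 - c) + (p - 1 - s) + 1 by omega,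
      blockSign_even _ (by omega)]
  · rw [sigmaT_odd hs hc, rpT_odd hs hc, blockSign_odd _ hs]

theorem sigmaT_iT {m p k : ℕ} (hk : k ∈ Icc 1 (2 * m * p - 1)) :
    sigmaT (4 * m * p - 1) (4 * m * p - 2 * p - 1) (iT (4 * m * p - 1) (4 * m * p - 2 * p - 1) k)
      = blockSign p k := by
  obtain ⟨h1, h2⟩ := iT_spec hk
  rw [sigmaT_eq_blockSign_rpT (Icc_subset_Icc_right (by omega) h1), h2]

theorem blockSign_sub_div_two (p k : ℕ) :
    (blockSign p k - blockSign p (k + 1)) / 2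
      = (1 + blockSign p k) / 2 - (1 + blockSign p (k + 1)) / 2 := by
  unfold blockSign; split_ifs <;> norm_num

theorem sum_Icc_sub_succ (f : ℕ → ℤ) {a b : ℕ} (h : a ≤ b + 1) :
    ∑ k ∈ Icc a b, (f k - f (k + 1)) = f a - f (b + 1) := by
  rw [← Finset.Ico_add_one_right_eq_Icc, ← neg_sub (f (b + 1)), ← Finset.sum_Ico_sub f h,
    ← sum_neg_distrib]
  simp

theorem sum_sigmaT_iT_from_rpT {m p j : ℕ} (hm : 0 < m) (hj : j ∈ Icc 1 (2 * m * p - 1)) :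
    ∑ k ∈ Icc (rpT (4 * m * p - 1) (4 * m * p - 2 * p - 1) j) (2 * m * p - 1),
      (sigmaT (4 * m * p - 1) (4 * m * p - 2 * p - 1)
          (iT (4 * m * p - 1) (4 * m * p - 2 * p - 1) k)
        + sigmaT (4 * m * p - 1) (4 * m * p - 2 * p - 1)
          (iT (4 * m * p - 1) (4 * m * p - 2 * p - 1) (2 * m * p - 1 + 1 - k))) / 2
      = (1 + sigmaT (4 * m * p - 1) (4 * m * p - 2 * p - 1) j) / 2 := by
  have hr := mem_Icc.1 (rpT_mem hj)
  have hj' := mem_Icc.1 hj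
  have hp : 0 < p := Nat.pos_of_ne_zero fun h => by subst h; omega
  have hL : 2 * m * p - 1 + 1 = 2 * p * m := by
    rw [show 2 * p * m = 2 * m * p by ring]; omega
  rw [sum_congr rfl fun k hk => ?_, sum_Icc_sub_succ (fun k => (1 + blockSign p k) / 2) (by omega),
    sigmaT_eq_blockSign_rpT (Icc_subset_Icc_right (by omega) hj)]
  · obtain ⟨M, rfl⟩ := Nat.exists_eq_succ_of_ne_zero hm.ne'
    obtain ⟨e, rfl⟩ := Nat.exists_eq_succ_of_ne_zero hp.ne'
    rw [hL, show 2 * (e + 1) * M.succ = 2 * (e + 1) * M + (e + 1) + e + 1 by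
      rw [Nat.succ_eq_add_one]; ring, blockSign_odd M (by omega)]
    simp
  · have hk' := mem_Icc.1 hk
    rw [sigmaT_iT (mem_Icc.2 (by omega)), sigmaT_iT (mem_Icc.2 (by omega)), hL,
      blockSign_reflect (by rw [← hL]; omega), ← sub_eq_add_neg, blockSign_sub_div_two]

theorem aT_eq {m p : ℕ} (hm : 0 < m) (hp : 0 < p) (n : ℕ → ℕ) :
    aT (4 * m * p - 1) (4 * m * p - 2 * p - 1) n
      = -∑ s ∈ range p, ((n (2 * m * s + m) : ℤ) - n (2 * m * s))
        - (1 + blockSign m (2 * m * p - 1)) / 2 * n (2 * m * p - 1) - 1 := by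
  have hL : 1 < 2 * m * p := by
    have := Nat.mul_pos hm hp
    rw [mul_assoc]; omega
  have htop := blockSign_two_mul hm hp
  have A : ∑ j ∈ Icc 1 (2 * m * p - 1),
      (1 + sigmaT (4 * m * p - 1) (4 * m * p - 2 * p - 1) j) / 2 * ((n j : ℤ) - (n (j - 1) : ℤ))
      = ∑ s ∈ range p, ((n (2 * m * s + m) : ℤ) - n (2 * m * s)) := by
    rw [sum_Icc_pred (by omega), sum_Icc_blocks,
      sigmaT_eq_blockSign (right_mem_Icc.2 (by omega)), htop]
    simp only [add_neg_cancel, EuclideanDomain.zero_div, zero_mul, sub_zero]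
    refine sum_congr rfl fun s hs => ?_
    rw [mem_range] at hs
    refine Eq.trans ?_ (Finset.sum_range_sub (fun c => (n (2 * m * s + c) : ℤ)) m)
    refine sum_congr rfl fun c hc => ?_
    rw [mem_range] at hc
    rw [sigmaT_even hs hc, sigmaT_odd hs hc]
    simp [add_assoc]
  have B : ∀ j ∈ Icc 1 (2 * m * p - 1 - 1),
      ((sigmaT (4 * m * p - 1) (4 * m * p - 2 * p - 1) (j + 1)
        + sigmaT (4 * m * p - 1) (4 * m * p - 2 * p - 1) (2 * m * p - 1 + 1 - j)) / 2) * (n j : ℤ)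
      = 0 := by
    intro j hj
    rw [mem_Icc] at hj
    rw [sigmaT_eq_blockSign (mem_Icc.2 (by omega)), sigmaT_eq_blockSign (mem_Icc.2 (by omega)),
      show 2 * m * p - 1 + 1 = 2 * m * p by omega, blockSign_reflect (by omega)]
    simp
  have C : ∑ j ∈ Icc 1 (2 * m * p - 1), sigmaT (4 * m * p - 1) (4 * m * p - 2 * p - 1) j = 1 := by
    rw [sum_Icc_pred (by omega), sum_Icc_blocks,
      sigmaT_eq_blockSign (right_mem_Icc.2 (by omega)), htop, sum_eq_zero, zero_sub, neg_neg]
    intro s hs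
    refine sum_eq_zero fun c hc => ?_
    rw [sigmaT_even (mem_range.1 hs) (mem_range.1 hc), sigmaT_odd (mem_range.1 hs) (mem_range.1 hc)]
    simp
  unfold aT
  rw [half_len, sum_congr rfl fun j hj => by rw [sum_sigmaT_iT_from_rpT hm hj], A,
    sum_eq_zero B, C, sigmaT_eq_blockSign (mem_Icc.2 (by omega)), add_comm (blockSign _ _)]
  ring

theorem half_sub_len {m p : ℕ} (hm : 0 < m) (hp : 0 < p) :
    (4 * m * p - 1 - (4 * m * p - 2 * p - 1)) / 2 = p := by
  obtain ⟨M, rfl⟩ := Nat.exists_eq_succ_of_ne_zero hm.ne'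
  have : 4 * M.succ * p = 4 * (M * p) + 4 * p := by rw [Nat.succ_eq_add_one]; ring
  omega

theorem b2T_eq {m p : ℕ} (hm : 0 < m) (hp : 0 < p) (n : ℕ → ℕ) :
    b2T (4 * m * p - 1) (4 * m * p - 2 * p - 1) n
      = ∑ k ∈ Icc (p + 1) (2 * m * p - p - 1),
        ((1 + sigmaT (4 * m * p - 1) (4 * m * p - 2 * p - 1)
          (iT (4 * m * p - 1) (4 * m * p - 2 * p - 1) k)) / 2) *
          (n (iT (4 * m * p - 1) (4 * m * p - 2 * p - 1) k - 1) : ℤ) := by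
  unfold b2T
  rw [half_sub_len hm hp]
  obtain ⟨M, rfl⟩ := Nat.exists_eq_succ_of_ne_zero hm.ne'
  have h4 : 4 * M.succ * p = 4 * (M * p) + 4 * p := by rw [Nat.succ_eq_add_one]; ring
  have h2 : 2 * M.succ * p = 2 * (M * p) + 2 * p := by rw [Nat.succ_eq_add_one]; ring
  split_ifs with h
  · rw [show (4 * M.succ * p - 2 * p - 1 - 1) / 2 = 2 * M.succ * p - p - 1 by omega]
  · have hM : M = 0 := by
      by_contra hM
      have := Nat.mul_le_mul_right p (Nat.one_le_iff_ne_zero.2 hM)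
      omega
    subst hM
    rw [Icc_eq_empty_of_lt (by omega), Icc_eq_empty_of_lt (by omega)]
    simp

theorem sum_Icc_iT_eq {m p a b : ℕ} (hb : b ≤ 2 * m * p - 1) (ha : 1 ≤ a) (G : ℕ → ℤ) :
    ∑ k ∈ Icc a b, G (iT (4 * m * p - 1) (4 * m * p - 2 * p - 1) k)
      = ∑ j ∈ Icc 1 (2 * m * p - 1),
        if a ≤ rpT (4 * m * p - 1) (4 * m * p - 2 * p - 1) j ∧
          rpT (4 * m * p - 1) (4 * m * p - 2 * p - 1) j ≤ b then G j else 0 := by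
  rw [← sum_iT fun k j => if a ≤ k ∧ k ≤ b then G j else 0, ← sum_filter]
  refine sum_congr ?_ fun _ _ => rfl
  ext k; simp only [mem_Icc, mem_filter]; omega

theorem sum_iT_linear {m p : ℕ} (hm : 0 < m) (hp : 0 < p) (n : ℕ → ℤ) (h0 : n 0 = 0) :
    -∑ k ∈ Icc (p + 1) (2 * m * p - 1), n (iT (4 * m * p - 1) (4 * m * p - 2 * p - 1) k - 1)
      + ∑ k ∈ Icc (p + 1) (2 * m * p - 1),
        ((1 + sigmaT (4 * m * p - 1) (4 * m * p - 2 * p - 1)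
          (iT (4 * m * p - 1) (4 * m * p - 2 * p - 1) k)) / 2) *
          n (iT (4 * m * p - 1) (4 * m * p - 2 * p - 1) k)
      + ∑ k ∈ Icc (p + 1) (2 * m * p - p - 1),
        ((1 + sigmaT (4 * m * p - 1) (4 * m * p - 2 * p - 1)
          (iT (4 * m * p - 1) (4 * m * p - 2 * p - 1) k)) / 2) *
          n (iT (4 * m * p - 1) (4 * m * p - 2 * p - 1) k - 1)
      = ∑ s ∈ range p, (∑ c ∈ range m, n (2 * m * s + c) - n (2 * m * s)
          - ∑ c ∈ range m, n (2 * m * s + m + c)) + n (2 * m * p - 1) := by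
  have hL : 0 < 2 * m * p := by positivity
  rw [sum_Icc_iT_eq le_rfl (by omega) (fun j => n (j - 1)),
    sum_Icc_iT_eq le_rfl (by omega) (fun j => ((1 + sigmaT (4 * m * p - 1)
      (4 * m * p - 2 * p - 1) j) / 2) * n j),
    sum_Icc_iT_eq (by omega) (by omega) (fun j => ((1 + sigmaT (4 * m * p - 1)
      (4 * m * p - 2 * p - 1) j) / 2) * n (j - 1)), ← sum_neg_distrib, ← sum_add_distrib,
    ← sum_add_distrib]
  rw [sum_congr rfl (g := fun j =>
    -(if p + 1 ≤ rpT (4 * m * p - 1) (4 * m * p - 2 * p - 1) j then n (j - 1) else 0)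
      + (if p + 1 ≤ rpT (4 * m * p - 1) (4 * m * p - 2 * p - 1) j then
        ((1 + sigmaT (4 * m * p - 1) (4 * m * p - 2 * p - 1) j) / 2) * n j else 0)
      + (if p + 1 ≤ rpT (4 * m * p - 1) (4 * m * p - 2 * p - 1) j ∧
        rpT (4 * m * p - 1) (4 * m * p - 2 * p - 1) j ≤ 2 * m * p - p - 1 then
        ((1 + sigmaT (4 * m * p - 1) (4 * m * p - 2 * p - 1) j) / 2) * n (j - 1) else 0))]
  swap
  · intro j hj
    simp only [(mem_Icc.1 (rpT_mem hj)).2, and_true]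
  have htop : sigmaT (4 * m * p - 1) (4 * m * p - 2 * p - 1) (2 * m * p) = -1 := by
    rw [sigmaT_eq_blockSign (right_mem_Icc.2 hL), blockSign_two_mul hm hp]
  have hpL : p + 1 ≤ 2 * m * p := by
    obtain ⟨M, rfl⟩ := Nat.exists_eq_succ_of_ne_zero hm.ne'
    have h2 : 2 * M.succ * p = 2 * (M * p) + 2 * p := by rw [Nat.succ_eq_add_one]; ring
    omega
  rw [sum_Icc_pred hL, sum_Icc_blocks, rpT_top hm hp, htop]
  simp only [hpL, if_true, add_neg_cancel, EuclideanDomain.zero_div, zero_mul, add_zero, ite_self,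
    sub_neg_eq_add, add_left_inj]
  refine sum_congr rfl fun s hs => ?_
  rw [mem_range] at hs
  have key : ∀ F G : ℕ → ℤ, (∀ c < m, F c = if c < m - 1 then n (2 * m * s + (c + 1)) else 0) →
      (∀ c < m, G c = -n (2 * m * s + m + c)) →
      ∑ c ∈ range m, (F c + G c) = ∑ c ∈ range m, n (2 * m * s + c) - n (2 * m * s)
          - ∑ c ∈ range m, n (2 * m * s + m + c) := by
    intro F G hF hG
    rw [sum_add_distrib, sum_congr rfl fun c hc => hF c (mem_range.1 hc),
      sum_congr rfl fun c hc => hG c (mem_range.1 hc), sum_neg_distrib, ← sub_eq_add_neg]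
    congr 1
    obtain ⟨M, rfl⟩ := Nat.exists_eq_succ_of_ne_zero hm.ne'
    rw [sum_range_succ, sum_range_succ']
    simp only [Nat.succ_eq_add_one, Nat.add_sub_cancel, lt_irrefl, if_false, add_zero,
      add_sub_cancel_right]
    exact sum_congr rfl fun c hc => if_pos (mem_range.1 hc)
  refine key _ _ (fun c hc => ?_) fun c hc => ?_
  · have h2 : 2 * m * p = 2 * p * (m - 1 - c) + 2 * p * c + 2 * p := by
      obtain ⟨e, rfl⟩ := Nat.exists_eq_add_of_lt hc
      rw [show c + e + 1 - 1 - c = e by omega]; ring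
    rw [rpT_even hs hc, sigmaT_even hs hc, Nat.add_sub_cancel]
    by_cases h : c < m - 1
    · have h3 : 2 * p ≤ 2 * p * (m - 1 - c) := Nat.le_mul_of_pos_right _ (by omega)
      rw [if_pos (by omega), if_pos (by omega), if_pos h]
      by_cases hz : c = 0 ∧ s = 0
      · obtain ⟨rfl, rfl⟩ := hz
        simp [h0]
      · rw [if_pos]
        · norm_num [add_assoc]
        · refine ⟨by omega, ?_⟩
          rcases Nat.eq_zero_or_pos c with rfl | hc0
          · omega
          · have : 2 * p ≤ 2 * p * c := Nat.le_mul_of_pos_right _ hc0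
            omega
    · have h3 : m - 1 - c = 0 := by omega
      rw [h3, if_neg (by omega), if_neg (by omega), if_neg (by omega), if_neg h]
      simp
  · rw [rpT_odd hs hc, sigmaT_odd hs hc, if_pos (by omega)]
    simp

theorem sum_sign_change {m p : ℕ} (hm : 0 < m) (hp : 0 < p) (n : ℕ → ℤ) (h0 : n 0 = 0) :
    ∑ j ∈ Icc 1 (2 * m * p - 1 - 1),
      ((sigmaT (4 * m * p - 1) (4 * m * p - 2 * p - 1) (j + 1)
        - sigmaT (4 * m * p - 1) (4 * m * p - 2 * p - 1) j) / 2) * n j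
      = ∑ s ∈ range p, (n (2 * m * s) - n (2 * m * s + m))
        + (1 + blockSign m (2 * m * p - 1)) / 2 * n (2 * m * p - 1) := by
  have hL : 1 < 2 * m * p := by
    have := Nat.mul_pos hm hp
    rw [mul_assoc]; omega
  have step : ∀ j ∈ Icc 1 (2 * m * p - 1 - 1),
      ((sigmaT (4 * m * p - 1) (4 * m * p - 2 * p - 1) (j + 1)
        - sigmaT (4 * m * p - 1) (4 * m * p - 2 * p - 1) j) / 2) * n j
      = (1 + blockSign m (j + 1)) / 2 * n j - (1 + blockSign m j) / 2 * n j := by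
    intro j hj
    rw [mem_Icc] at hj
    rw [sigmaT_eq_blockSign (mem_Icc.2 (by omega)), sigmaT_eq_blockSign (mem_Icc.2 (by omega)),
      ← neg_sub, Int.neg_ediv_of_dvd, blockSign_sub_div_two]
    · ring
    · unfold blockSign; split_ifs <;> norm_num
  have htop := blockSign_two_mul hm hp
  rw [sum_congr rfl step, sum_Icc_pred (by omega), sum_sub_distrib,
    sum_Icc_eq_sum_range (by omega) (fun j => (1 + blockSign m (j + 1)) / 2 * n j) (by simp [h0]),
    sum_Icc_pred (by omega) (fun j => (1 + blockSign m j) / 2 * n j), sum_range_blocks,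
    sum_Icc_blocks, show 2 * m * p - 1 + 1 = 2 * m * p by omega, htop]
  have : ∀ s, ∑ c ∈ range m, ((1 + blockSign m (2 * m * s + c + 1)) / 2 * n (2 * m * s + c)
        + (1 + blockSign m (2 * m * s + m + c + 1)) / 2 * n (2 * m * s + m + c))
      - ∑ c ∈ range m, ((1 + blockSign m (2 * m * s + c + 1)) / 2 * n (2 * m * s + c + 1)
        + (1 + blockSign m (2 * m * s + m + c + 1)) / 2 * n (2 * m * s + m + c + 1))
      = n (2 * m * s) - n (2 * m * s + m) := by
    intro s
    rw [← sum_sub_distrib]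
    refine Eq.trans ?_ (Finset.sum_range_sub' (fun c => n (2 * m * s + c)) m)
    refine sum_congr rfl fun c hc => ?_
    rw [mem_range] at hc
    rw [blockSign_even s hc, blockSign_odd s hc]
    norm_num [add_assoc]
  simp only [← this, sum_sub_distrib]
  norm_num

theorem one_add_blockSign (m j : ℕ) : 1 + blockSign m j = 2 * ((1 + blockSign m j) / 2) := by
  unfold blockSign; split_ifs <;> norm_num

theorem kapT_eq {m p : ℕ} (hm : 0 < m) (hp : 0 < p) (N : ℕ) (n : ℕ → ℕ) :
    kapT (4 * m * p - 1) (4 * m * p - 2 * p - 1) N n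
      = -(N : ℤ) * (1 - (1 + blockSign m (2 * m * p - 1)) / 2) * n (2 * m * p - 1) := by
  have hL : 1 < 2 * m * p := by
    have := Nat.mul_pos hm hp
    rw [mul_assoc]; omega
  unfold kapT
  rw [half_len, sigmaT_eq_blockSign (mem_Icc.2 (by omega))]
  by_cases h : blockSign m (2 * m * p - 1) = -1
  · simp [h]
  · have : blockSign m (2 * m * p - 1) = 1 := by
      unfold blockSign at h ⊢; split_ifs at h ⊢ <;> simp_all
    simp [this]

theorem takata_exponent {m p : ℕ} (hm : 0 < m) (hp : 0 < p) (N : ℕ) (n : ℕ → ℕ) (h0 : n 0 = 0) :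
    aT (4 * m * p - 1) (4 * m * p - 2 * p - 1) n * (N : ℤ)
      + b1T (4 * m * p - 1) (4 * m * p - 2 * p - 1) n
      + b2T (4 * m * p - 1) (4 * m * p - 2 * p - 1) n
      + kapT (4 * m * p - 1) (4 * m * p - 2 * p - 1) N n
    = 1 - N - N * ∑ s ∈ range p, ((n (2 * m * s + m) : ℤ) - n (2 * m * s))
      - N * n (2 * m * p - 1) + n (2 * m * p - 1)
      + ∑ s ∈ range p, (∑ c ∈ range m, (n (2 * m * s + c) : ℤ) - n (2 * m * s)
          - ∑ c ∈ range m, (n (2 * m * s + m + c) : ℤ))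
      - ∑ s ∈ range p, ∑ s' ∈ range p,
        ((if s' < s then ∑ c ∈ range m, ((n (2 * m * s + (c + 1)) : ℤ) - n (2 * m * s + c)) *
            ((n (2 * m * s' + m + m) : ℤ) - n (2 * m * s' + m + (m - 1 - c))) else 0)
          - (if s' ≤ s then ∑ c ∈ range m,
            ((n (2 * m * s + m + (c + 1)) : ℤ) - n (2 * m * s + m + c)) *
            ((n (2 * m * s' + (m - 1 - c)) : ℤ) - n (2 * m * s')) else 0))
      + ∑ j ∈ Icc 1 (2 * m * p - 1), sigmaT (4 * m * p - 1) (4 * m * p - 2 * p - 1) j *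
        (∑ k ∈ Icc 1 (rpT (4 * m * p - 1) (4 * m * p - 2 * p - 1) j),
          ((n (iT (4 * m * p - 1) (4 * m * p - 2 * p - 1) k) : ℤ)
            - n (iT (4 * m * p - 1) (4 * m * p - 2 * p - 1) k - 1))) * n (j - 1) := by
  have hL : 1 < 2 * m * p := by
    have := Nat.mul_pos hm hp
    rw [mul_assoc]; omega
  have hpL : p + 1 ≤ 2 * m * p := by
    obtain ⟨M, rfl⟩ := Nat.exists_eq_succ_of_ne_zero hm.ne'
    have h2 : 2 * M.succ * p = 2 * (M * p) + 2 * p := by rw [Nat.succ_eq_add_one]; ring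
    omega
  have T1 : ∑ k ∈ Icc 1 p, ((1 - sigmaT (4 * m * p - 1) (4 * m * p - 2 * p - 1)
      (iT (4 * m * p - 1) (4 * m * p - 2 * p - 1) k)) / 2) *
      (n (iT (4 * m * p - 1) (4 * m * p - 2 * p - 1) k - 1) : ℤ) = 0 := by
    refine sum_eq_zero fun k hk => ?_
    rw [mem_Icc] at hk
    have := blockSign_even (m := p) (b := k - 1) 0 (by omega)
    rw [show 2 * p * 0 + (k - 1) + 1 = k by omega] at this
    rw [sigmaT_iT (mem_Icc.2 (by omega)), this]
    simp
  have lin := sum_iT_linear hm hp (fun i => (n i : ℤ)) (by simp [h0])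
  have chg := sum_sign_change hm hp (fun i => (n i : ℤ)) (by simp [h0])
  have inv := inversion_quadratic hm hp (fun i => (n i : ℤ))
  beta_reduce at lin chg inv
  have hneg : ∑ s ∈ range p, ((n (2 * m * s) : ℤ) - n (2 * m * s + m))
      = -∑ s ∈ range p, ((n (2 * m * s + m) : ℤ) - n (2 * m * s)) := by
    rw [← sum_neg_distrib]; simp
  rw [kapT_eq hm hp, b2T_eq hm hp, b1T]
  simp only [half_len, half_sub_len hm hp]
  rw [T1, sigmaT_eq_blockSign (m := m) (p := p) (j := 2 * m * p - 1) (mem_Icc.2 (by omega)),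
    aT_eq hm hp n, inv, chg, hneg]
  have hu := one_add_blockSign m (2 * m * p - 1)
  generalize (1 + blockSign m (2 * m * p - 1)) / 2 = u at hu ⊢
  rw [hu]
  linear_combination lin

theorem two_mul_triangle (a : ℤ) : 2 * (a * (a + 1) / 2) = a * (a + 1) :=
  Int.mul_ediv_cancel' (Int.even_mul_succ_self a).two_dvd

theorem gamLO_even {m c : ℕ} (s : ℕ) (hc : c < m) :
    gamLO m (2 * m * s + c) = if c = 0 then -1 else 1 := by
  rw [gamLO, Nat.mul_add_mod, Nat.mod_eq_of_lt (by omega)]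
  split_ifs <;> first | rfl | omega

theorem gamLO_odd {m c : ℕ} (s : ℕ) (hc : c < m) : gamLO m (2 * m * s + m + c) = -1 := by
  rw [gamLO, add_assoc, Nat.mul_add_mod, Nat.mod_eq_of_lt (by omega), if_neg (by omega)]

/-- The exponents contributed by `τ`, written over blocks. -/
theorem sum_tau_exponent {m p : ℕ} (hm : 0 < m) (hp : 0 < p) (D : ℕ → ℤ) :
    2 * ∑ j ∈ Icc 1 (2 * m * p - 1),
      (if sigmaT (4 * m * p - 1) (4 * m * p - 2 * p - 1) j = -1 then 0 else D j * (D j + 1) / 2)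
      = ∑ s ∈ range p, ∑ c ∈ range m, D (2 * m * s + c + 1) * (D (2 * m * s + c + 1) + 1) := by
  have hL : 0 < 2 * m * p := by positivity
  rw [sum_Icc_pred hL, sum_Icc_blocks, sigmaT_eq_blockSign (right_mem_Icc.2 hL),
    blockSign_two_mul hm hp, if_pos rfl, sub_zero, mul_sum]
  refine sum_congr rfl fun s hs => ?_
  rw [mul_sum]
  refine sum_congr rfl fun c hc => ?_
  rw [sigmaT_even (mem_range.1 hs) (mem_range.1 hc), sigmaT_odd (mem_range.1 hs) (mem_range.1 hc),
    if_pos rfl, if_neg (by norm_num), add_zero, two_mul_triangle]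

/-- A sum over the block boundaries `m i`, split by the parity of `i`. -/
theorem sum_Icc_boundary {p : ℕ} (hp : 0 < p) (F : ℕ → ℤ) (h0 : F 0 = 0) :
    ∑ i ∈ Icc 1 (2 * p - 1), F i = ∑ s ∈ range p, (F (2 * s) + F (2 * s + 1)) := by
  rw [sum_Icc_eq_sum_range (by omega) F h0]
  simpa using sum_range_blocks 1 p F

/-- The exponents attached to consecutive entries, written over blocks. -/
theorem sum_consecutive {m p : ℕ} (hm : 0 < m) (hp : 0 < p) (n : ℕ → ℤ) (h0 : n 0 = 0)
    (hL0 : n (2 * m * p) = 0) :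
    ∑ i ∈ Icc 1 (2 * m * p - 2), (-(n i * n (i + 1)) + gamLO m i * n i)
      = n (2 * m * p - 1) + ∑ s ∈ range p, (∑ c ∈ range m, n (2 * m * s + c) - 2 * n (2 * m * s)
        - ∑ c ∈ range m, n (2 * m * s + m + c)
        - ∑ c ∈ range m, n (2 * m * s + c) * n (2 * m * s + (c + 1))
        - ∑ c ∈ range m, n (2 * m * s + m + c) * n (2 * m * s + m + (c + 1))) := by
  have hL : 1 < 2 * m * p := by
    have := Nat.mul_pos hm hp
    rw [mul_assoc]; omega
  have hg : gamLO m (2 * m * p - 1) = -1 := by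
    obtain ⟨e, rfl⟩ := Nat.exists_eq_succ_of_ne_zero hp.ne'
    rw [show 2 * m * e.succ - 1 = 2 * m * e + m + (m - 1) by
      have : 2 * m * e.succ = 2 * m * e + 2 * m := by rw [Nat.succ_eq_add_one]; ring
      omega, gamLO_odd e (by omega)]
  rw [show 2 * m * p - 2 = 2 * m * p - 1 - 1 by omega, sum_Icc_pred (by omega),
    sum_Icc_eq_sum_range (by omega) _ (by simp [h0]), sum_range_blocks, hg,
    show 2 * m * p - 1 + 1 = 2 * m * p by omega, hL0]
  have : ∀ s, ∑ c ∈ range m, (-(n (2 * m * s + c) * n (2 * m * s + c + 1))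
          + gamLO m (2 * m * s + c) * n (2 * m * s + c)
        + (-(n (2 * m * s + m + c) * n (2 * m * s + m + c + 1))
          + gamLO m (2 * m * s + m + c) * n (2 * m * s + m + c)))
      = ∑ c ∈ range m, n (2 * m * s + c) - 2 * n (2 * m * s)
        - ∑ c ∈ range m, n (2 * m * s + m + c)
        - ∑ c ∈ range m, n (2 * m * s + c) * n (2 * m * s + (c + 1))
        - ∑ c ∈ range m, n (2 * m * s + m + c) * n (2 * m * s + m + (c + 1)) := by
    intro s
    have h2 : 2 * n (2 * m * s) = ∑ c ∈ range m, if c = 0 then 2 * n (2 * m * s + c) else 0 := by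
      rw [sum_ite_eq', if_pos (mem_range.2 hm), add_zero]
    rw [h2]
    simp only [← sum_sub_distrib]
    refine sum_congr rfl fun c hc => ?_
    rw [gamLO_even s (mem_range.1 hc), gamLO_odd s (mem_range.1 hc)]
    split_ifs <;> simp only [add_assoc] <;> ring
  rw [sum_congr rfl fun s _ => this s]
  ring

/-- The exponents at the block boundaries, written over blocks. -/
theorem sum_boundary_exponent {p : ℕ} (m : ℕ) (hp : 0 < p) (N : ℤ) (n : ℕ → ℤ) (h0 : n 0 = 0) :
    2 * ∑ i ∈ Icc 1 (2 * p - 1), ((-1) ^ i * N * n (m * i) + n (m * i) * (n (m * i) + 1) / 2)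
      = ∑ s ∈ range p, (2 * N * (n (2 * m * s) - n (2 * m * s + m))
        + n (2 * m * s) * (n (2 * m * s) + 1) + n (2 * m * s + m) * (n (2 * m * s + m) + 1)) := by
  rw [sum_Icc_boundary hp _ (by simp [h0]), mul_sum]
  refine sum_congr rfl fun s _ => ?_
  rw [show m * (2 * s) = 2 * m * s by ring, show m * (2 * s + 1) = 2 * m * s + m by ring, pow_succ,
    pow_mul, neg_one_sq, one_pow]
  linear_combination two_mul_triangle (n (2 * m * s)) + two_mul_triangle (n (2 * m * s + m))

theorem sum_triangle_sub (x : ℕ → ℤ) (m : ℕ) :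
    ∑ c ∈ range m, (x (c + 1) - x c) * (x (c + 1) - x c + 1)
      = x m ^ 2 - x 0 ^ 2 + x m - x 0 + 2 * ∑ c ∈ range m, x c ^ 2
        - 2 * ∑ c ∈ range m, x c * x (c + 1) := by
  induction m with
  | zero => simp
  | succ m ih => rw [sum_range_succ, ih, sum_range_succ, sum_range_succ]; ring

/-- The exponents of `q` on both sides of the identity agree. -/
theorem exponent_eq {m p : ℕ} (hm : 0 < m) (hp : 0 < p) (N : ℕ) (n : ℕ → ℕ) (h0 : n 0 = 0)
    (hL0 : n (2 * m * p) = 0) :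
    aT (4 * m * p - 1) (4 * m * p - 2 * p - 1) n * (N : ℤ)
      + b1T (4 * m * p - 1) (4 * m * p - 2 * p - 1) n
      + b2T (4 * m * p - 1) (4 * m * p - 2 * p - 1) n
      + kapT (4 * m * p - 1) (4 * m * p - 2 * p - 1) N n
      + ∑ j ∈ Icc 1 (2 * m * p - 1),
        (if sigmaT (4 * m * p - 1) (4 * m * p - 2 * p - 1) j = -1 then 0
          else ((n j : ℤ) - n (j - 1)) * (((n j : ℤ) - n (j - 1)) + 1) / 2)
    = 1 - N - N * n (2 * m * p - 1)
      + ∑ i ∈ (Icc 1 (2 * m * p - 1)).filter (fun i => ¬ m ∣ i),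
          ∑ j ∈ Icc (i + 1) (2 * m * p - 1), epsLO m i j * (n i : ℤ) * (n j : ℤ)
      + ∑ i ∈ Icc 1 (2 * p - 1), ((-1 : ℤ) ^ i * (N : ℤ) * (n (m * i) : ℤ)
          + (n (m * i) : ℤ) * ((n (m * i) : ℤ) + 1) / 2)
      + ∑ i ∈ Icc 1 (2 * m * p - 2), (-((n i : ℤ) * (n (i + 1) : ℤ)) + gamLO m i * (n i : ℤ)) := by
  have hB := sum_boundary_exponent m hp N (fun i => (n i : ℤ)) (by simp [h0])
  have hT := sum_tau_exponent hm hp (fun j => (n j : ℤ) - n (j - 1))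
  have hS : ∀ s, _ := fun s => sum_triangle_sub (fun c => (n (2 * m * s + c) : ℤ)) m
  have hC := sum_consecutive hm hp (fun i => (n i : ℤ)) (by simp [h0]) (by simp [hL0])
  have hR := rank_quadratic hm hp (fun i => (n i : ℤ)) (by simp [h0]) (by simp [hL0])
  have hA := takata_exponent hm hp N n h0
  obtain ⟨M, rfl⟩ := Nat.exists_eq_succ_of_ne_zero hm.ne'
  simp only [Nat.succ_eq_add_one] at *
  have hQ := block_quadratic (fun s c => (n (2 * (M + 1) * s + c) : ℤ))
    (fun s c => (n (2 * (M + 1) * s + (M + 1) + c) : ℤ)) M p (by simp [h0]) (fun s => rfl)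
    (fun s => by ring_nf)
  have hE := eps_quadratic (M := M) hp (fun i => (n i : ℤ))
  beta_reduce at hE
  simp only [Nat.add_sub_cancel, ← add_assoc] at hT hS
  simp only [hS] at hT
  rw [hR] at hA
  rw [hC, hE]
  refine mul_left_cancel₀ (two_ne_zero (α := ℤ)) ?_
  simp only [sum_sub_distrib, sum_add_distrib, ← mul_sum, mul_add, mul_one, Nat.add_sub_cancel,
    add_zero, ← add_assoc, ← pow_two, mul_sub] at hA hB hT hQ ⊢
  linear_combination 2 * hA - hB + hT + 2 * hQ

theorem prod_zpow_eq_zpow_sum {ι : Type*} {q : ℂ} (hq : q ≠ 0) (s : Finset ι) (e : ι → ℤ) :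
    ∏ i ∈ s, q ^ e i = q ^ ∑ i ∈ s, e i := by
  classical
  induction s using Finset.induction_on with
  | empty => simp
  | insert a s ha ih => rw [prod_insert ha, sum_insert ha, ih, zpow_add₀ hq]

theorem qPoch_succ (a q : ℂ) (n : ℕ) : qPoch a q (n + 1) = qPoch a q n * (1 - a * q ^ n) :=
  prod_range_succ _ _

theorem qPoch_zero (a q : ℂ) : qPoch a q 0 = 1 := prod_range_zero _

theorem qPoch_ne_zero_of_le {a q : ℂ} {k n : ℕ} (h : k ≤ n) (hn : qPoch a q n ≠ 0) :
    qPoch a q k ≠ 0 :=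
  prod_ne_zero_iff.2 fun i hi =>
    prod_ne_zero_iff.1 hn i (mem_range.2 ((mem_range.1 hi).trans_le h))

theorem gaussPoly_eq_zero_of_lt : ∀ {n k : ℕ}, n < k → gaussPoly n k = 0
  | _, 0, h => absurd h (Nat.not_lt_zero _)
  | 0, _ + 1, _ => by simp [gaussPoly]
  | n + 1, k + 1, h => by
    rw [gaussPoly, gaussPoly_eq_zero_of_lt (Nat.lt_of_succ_lt_succ h),
      gaussPoly_eq_zero_of_lt (Nat.lt_of_succ_lt h), mul_zero, add_zero]

theorem gbin_zero_right (q : ℂ) (n : ℕ) : gbin q n 0 = 1 := by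
  cases n <;> simp [gbin, gaussPoly]

theorem gbin_succ_succ (q : ℂ) (n k : ℕ) :
    gbin q (n + 1) (k + 1) = gbin q n k + q ^ (k + 1) * gbin q n (k + 1) := by
  simp [gbin, gaussPoly]

theorem gbin_add_mul_qPoch (q : ℂ) : ∀ a k : ℕ,
    gbin q (a + k) k * (qPoch q q k * qPoch q q a) = qPoch q q (a + k)
  | a, 0 => by simp [gbin_zero_right, qPoch_zero]
  | 0, k + 1 => by
    have ih := gbin_add_mul_qPoch q 0 k
    rw [zero_add] at ih ⊢
    rw [gbin_succ_succ, qPoch_succ, qPoch_zero, mul_one] at *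
    rw [show gbin q k (k + 1) = 0 by simp [gbin, gaussPoly_eq_zero_of_lt (Nat.lt_succ_self k)]]
    linear_combination (1 - q * q ^ k) * ih
  | a + 1, k + 1 => by
    have ih1 := gbin_add_mul_qPoch q (a + 1) k
    have ih2 := gbin_add_mul_qPoch q a (k + 1)
    rw [show a + 1 + (k + 1) = (a + k + 1) + 1 by ring, gbin_succ_succ]
    rw [show a + 1 + k = a + k + 1 by ring] at ih1
    rw [show a + (k + 1) = a + k + 1 by ring] at ih2
    rw [qPoch_succ q q (a + k + 1)]
    rw [qPoch_succ q q a] at *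
    rw [qPoch_succ q q k] at *
    linear_combination (1 - q * q ^ k) * ih1 + q ^ (k + 1) * (1 - q * q ^ a) * ih2

theorem prod_gbin_mul_prod_qPoch (q : ℂ) (n : ℕ → ℕ) (h0 : n 0 = 0) (K : ℕ)
    (hmono : ∀ i ≤ K, n i ≤ n (i + 1)) :
    (∏ i ∈ Icc 1 K, gbin q (n (i + 1)) (n i)) *
      ∏ j ∈ Icc 1 (K + 1), qPoch q q (n j - n (j - 1)) = qPoch q q (n (K + 1)) := by
  induction K with
  | zero => simp [h0]
  | succ K ih =>
    rw [prod_Icc_succ_top (by omega), prod_Icc_succ_top (b := K + 1) (by omega)]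
    have h1 := ih fun i hi => hmono i (by omega)
    have h2 := gbin_add_mul_qPoch q (n (K + 1 + 1) - n (K + 1)) (n (K + 1))
    rw [Nat.sub_add_cancel (hmono _ le_rfl)] at h2
    rw [Nat.add_sub_cancel]
    rw [← h1] at h2
    linear_combination h2

theorem qPoch_reflect {q : ℂ} (hq : q ≠ 0) {N n : ℕ} (hn : n < N) :
    qPoch (q ^ (1 - (N : ℤ))) q n * (-1) ^ n * q ^ (-((n : ℤ) * ((n : ℤ) + 1) / 2)) *
      qPoch q q (N - n - 1) = q ^ (-((N : ℤ) * n)) * qPoch q q (N - 1) := by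
  induction n with
  | zero => simp [qPoch_zero]
  | succ n ih =>
    have ih := ih (by omega)
    have htri : (((n + 1 : ℕ) : ℤ) * (((n + 1 : ℕ) : ℤ) + 1) / 2)
        = (n : ℤ) * ((n : ℤ) + 1) / 2 + (n + 1) := by
      have h1 := two_mul_triangle ((n + 1 : ℕ) : ℤ)
      have h2 := two_mul_triangle (n : ℤ)
      push_cast at h1 ⊢
      linarith
    obtain ⟨d, rfl⟩ := Nat.exists_eq_add_of_lt hn
    rw [show n + 1 + d + 1 - n - 1 = d + 1 by omega] at ih
    rw [show n + 1 + d + 1 - (n + 1) - 1 = d by omega]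
    rw [qPoch_succ] at ih
    rw [qPoch_succ, htri, neg_add, zpow_add₀ hq, pow_succ,
      show -(((n + 1 + d + 1 : ℕ) : ℤ) * ((n + 1 : ℕ) : ℤ))
        = -(((n + 1 + d + 1 : ℕ) : ℤ) * n) + -((n + 1 + d + 1 : ℕ) : ℤ) by push_cast; ring,
      zpow_add₀ hq]
    have key : -(1 - q ^ (1 - ((n + 1 + d + 1 : ℕ) : ℤ)) * q ^ n) * q ^ (-((n : ℤ) + 1))
        = q ^ (-((n + 1 + d + 1 : ℕ) : ℤ)) * (1 - q * q ^ d) := by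
      rw [mul_sub, ← pow_succ', ← zpow_natCast q n, ← zpow_natCast q (d + 1), ← zpow_add₀ hq,
        neg_sub, sub_mul, ← zpow_add₀ hq, ← zpow_add₀ hq, mul_one, one_mul]
      congr 2 <;> push_cast <;> ring
    linear_combination (q ^ (-((n + 1 + d + 1 : ℕ) : ℤ))) * ih +
      qPoch (q ^ (1 - ((n + 1 + d + 1 : ℕ) : ℤ))) q n * (-1) ^ n *
        q ^ (-((n : ℤ) * ((n : ℤ) + 1) / 2)) * qPoch q q d * key

theorem tauT_eq (l t : ℕ) (q : ℂ) (n : ℕ → ℕ) (j : ℕ) :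
    tauT l t q n j = (-1) ^ (if sigmaT l t j = -1 then n j - n (j - 1) else 0) *
      q ^ (if sigmaT l t j = -1 then 0
        else ((n j : ℤ) - n (j - 1)) * (((n j : ℤ) - n (j - 1)) + 1) / 2) := by
  unfold tauT; split_ifs <;> simp

/-- The signs on both sides of the identity agree. -/
theorem sign_eq {m p : ℕ} (hm : 0 < m) (hp : 0 < p) (n : ℕ → ℕ) (h0 : n 0 = 0)
    (hL0 : n (2 * m * p) = 0) (hmono : ∀ j ∈ Icc 1 (2 * m * p - 1), n (j - 1) ≤ n j) :
    (-1 : ℂ) ^ n (2 * m * p - 1) * (-1) ^ (∑ j ∈ Icc 1 (2 * m * p - 1),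
      if sigmaT (4 * m * p - 1) (4 * m * p - 2 * p - 1) j = -1 then n j - n (j - 1) else 0)
      = (-1) ^ ∑ i ∈ Icc 1 (2 * p - 1), n (m * i) := by
  have hL : 0 < 2 * m * p := by positivity
  have hD : ((∑ j ∈ Icc 1 (2 * m * p - 1), if sigmaT (4 * m * p - 1) (4 * m * p - 2 * p - 1) j = -1
      then n j - n (j - 1) else 0 : ℕ) : ℤ)
      = ∑ s ∈ range p, ((n (2 * m * s) : ℤ) - n (2 * m * s + m)) + n (2 * m * p - 1) := by
    rw [Nat.cast_sum, sum_congr rfl (g := fun j => if sigmaT (4 * m * p - 1)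
      (4 * m * p - 2 * p - 1) j = -1 then (n j : ℤ) - n (j - 1) else 0)]
    · rw [sum_Icc_pred hL, sum_Icc_blocks, sigmaT_eq_blockSign (right_mem_Icc.2 hL),
        blockSign_two_mul hm hp, if_pos rfl, hL0, sum_sub_distrib,
        ← sum_block_ends (fun i => (n i : ℤ)) hp (by simp [h0]) (by simp [hL0]), ← sum_sub_distrib]
      rw [sum_congr rfl (g := fun s => (n (2 * m * s + m + m) : ℤ) - n (2 * m * s + m))]
      · simp
      · intro s hs
        refine Eq.trans (sum_congr rfl fun c hc => ?_)
          (Finset.sum_range_sub (fun c => (n (2 * m * s + m + c) : ℤ)) m)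
        rw [sigmaT_even (mem_range.1 hs) (mem_range.1 hc),
          sigmaT_odd (mem_range.1 hs) (mem_range.1 hc), if_neg (by norm_num), if_pos rfl,
          zero_add, Nat.add_sub_cancel]
        rfl
    · intro j hj
      split_ifs
      · exact Nat.cast_sub (hmono j hj)
      · rfl
  have hB : ((∑ i ∈ Icc 1 (2 * p - 1), n (m * i) : ℕ) : ℤ)
      = ∑ s ∈ range p, ((n (2 * m * s) : ℤ) + n (2 * m * s + m)) := by
    rw [Nat.cast_sum, sum_Icc_boundary hp _ (by simp [h0])]
    refine sum_congr rfl fun s _ => ?_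
    rw [show m * (2 * s) = 2 * m * s by ring, show m * (2 * s + 1) = 2 * m * s + m by ring]
  rw [← pow_add]
  refine neg_one_pow_congr ?_
  rw [← Int.even_coe_nat, ← Int.even_coe_nat, Nat.cast_add, hD, hB, sum_sub_distrib,
    sum_add_distrib]
  simp only [Int.even_iff]
  omega

theorem takata_term_eq {m p N : ℕ} (hm : 0 < m) (hp : 0 < p) {q : ℂ} (hq : q ≠ 0)
    (hqN : qPoch q q (N - 1) ≠ 0) (n : ℕ → ℕ) (h0 : n 0 = 0) (hL0 : n (2 * m * p) = 0)
    (hN : n (2 * m * p - 1) < N) (hmono : ∀ i < 2 * m * p - 1, n i ≤ n (i + 1)) :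
    q ^ (aT (4 * m * p - 1) (4 * m * p - 2 * p - 1) n * (N : ℤ)
          + b1T (4 * m * p - 1) (4 * m * p - 2 * p - 1) n
          + b2T (4 * m * p - 1) (4 * m * p - 2 * p - 1) n) *
        XT (4 * m * p - 1) (4 * m * p - 2 * p - 1) N q n
    = q ^ (1 - (N : ℤ)) *
      (qPoch (q ^ (1 - (N : ℤ))) q (n (2 * m * p - 1)) *
          (-1 : ℂ) ^ (n (2 * m * p - 1)) *
          q ^ (-(((n (2 * m * p - 1) : ℤ) * ((n (2 * m * p - 1) : ℤ) + 1)) / 2)) *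
          (∏ i ∈ (Icc 1 (2 * m * p - 1)).filter (fun i => ¬ m ∣ i),
            ∏ j ∈ Icc (i + 1) (2 * m * p - 1),
              q ^ (epsLO m i j * (n i : ℤ) * (n j : ℤ))) *
          (∏ i ∈ Icc 1 (2 * p - 1),
            (-1 : ℂ) ^ (n (m * i)) *
              q ^ ((-1 : ℤ) ^ i * (N : ℤ) * (n (m * i) : ℤ)
                    + ((n (m * i) : ℤ) * ((n (m * i) : ℤ) + 1)) / 2)) *
          (∏ i ∈ Icc 1 (2 * m * p - 2),
            q ^ (-((n i : ℤ) * (n (i + 1) : ℤ)) + gamLO m i * (n i : ℤ)) *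
              gbin q (n (i + 1)) (n i))) := by
  have hL : 1 < 2 * m * p := by
    have := Nat.mul_pos hm hp
    rw [mul_assoc]; omega
  have hle : ∀ j ∈ Icc 1 (2 * m * p - 1), n (j - 1) ≤ n j := fun j hj => by
    rw [mem_Icc] at hj
    simpa [Nat.sub_add_cancel hj.1] using hmono (j - 1) (by omega)
  have hG := prod_gbin_mul_prod_qPoch q n h0 (2 * m * p - 2) fun i hi => hmono i (by omega)
  rw [show 2 * m * p - 2 + 1 = 2 * m * p - 1 by omega] at hG
  have hR := qPoch_reflect hq hN
  have hQ : qPoch q q (N - n (2 * m * p - 1) - 1) ≠ 0 := qPoch_ne_zero_of_le (by omega) hqN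
  have hD : ∏ j ∈ Icc 1 (2 * m * p - 1), qPoch q q (n j - n (j - 1)) ≠ 0 := by
    refine right_ne_zero_of_mul (hG.trans_ne (qPoch_ne_zero_of_le (by omega) hqN))
  have hS := sign_eq hm hp n h0 hL0 hle
  have hE := exponent_eq hm hp N n h0 hL0
  replace hE := congrArg (q ^ ·) hE
  rw [sub_eq_add_neg (1 - (N : ℤ))] at hE
  simp only [zpow_add₀ hq _ (kapT _ _ _ _), zpow_add₀ hq _ (∑ _ ∈ _, _), zpow_add₀ hq _ (-(_ * _))]
    at hE
  rw [XT, half_len, prod_div_distrib, ← hG]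
  simp only [tauT_eq, prod_mul_distrib, prod_zpow_eq_zpow_sum hq, prod_pow_eq_pow_sum]
  rw [← hS, eq_div_iff hQ |>.2 hR]
  have alg : ∀ {qA qK qT q1 qN qE qB qC s₁ s₂ Q₁ G D Q₂ : ℂ}, D ≠ 0 → Q₂ ≠ 0 →
      qA * qK * qT = q1 * qN * qE * qB * qC →
      qA * (s₁ * qK * (Q₁ * (G * D) / Q₂) * (s₂ * qT / D))
        = q1 * (qN * Q₁ / Q₂ * qE * (s₁ * s₂ * qB) * (qC * G)) := by
    intro qA qK qT q1 qN qE qB qC s₁ s₂ Q₁ G D Q₂ hD hQ h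
    field_simp
    linear_combination s₁ * s₂ * Q₁ * G * h
  exact alg hD hQ hE

theorem extTup_le {P N : ℕ} {f : Fin P → Fin N} (hf : ∀ i j, i ≤ j → f i ≤ f j) {i : ℕ}
    (hi : i < P) : extTup P N f i ≤ extTup P N f (i + 1) := by
  unfold extTup
  rw [dif_pos (⟨by omega, by omega⟩ : 1 ≤ i + 1 ∧ i + 1 ≤ P)]
  split_ifs
  · exact hf _ _ (Fin.mk_le_mk.2 (by omega))
  · exact Nat.zero_le _

theorem extTup_lt {P N : ℕ} (hN : 0 < N) (f : Fin P → Fin N) (i : ℕ) : extTup P N f i < N := by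
  unfold extTup
  split_ifs
  · exact Fin.is_lt _
  · exact hN

/-- Theorem 1.1 (Lovejoy–Osburn): the colored Jones polynomial of the double twist
knot `K_(-m,-p)`, i.e. Takata's sum for `l = 4mp-1`, `t = 4mp-2p-1`, equals the stated
multiple `q`-hypergeometric sum. -/
theorem colored_jones_double_twist_neg_neg
    (m p N : ℕ) (hm : 0 < m) (hp : 0 < p) (hN : 0 < N)
    (q : ℂ) (hq : q ≠ 0) (hqN : qPoch q q (N - 1) ≠ 0) :
    (∑ f ∈ Finset.univ.filter
        (fun f : Fin (2 * m * p - 1) → Fin N => ∀ i j, i ≤ j → f i ≤ f j),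
      let n := extTup (2 * m * p - 1) N f
      q ^ (aT (4 * m * p - 1) (4 * m * p - 2 * p - 1) n * (N : ℤ)
            + b1T (4 * m * p - 1) (4 * m * p - 2 * p - 1) n
            + b2T (4 * m * p - 1) (4 * m * p - 2 * p - 1) n) *
        XT (4 * m * p - 1) (4 * m * p - 2 * p - 1) N q n)
    = q ^ (1 - (N : ℤ)) *
      ∑ f ∈ Finset.univ.filter
          (fun f : Fin (2 * m * p - 1) → Fin N => ∀ i j, i ≤ j → f i ≤ f j),
        let n := extTup (2 * m * p - 1) N f
        qPoch (q ^ (1 - (N : ℤ))) q (n (2 * m * p - 1)) *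
          (-1 : ℂ) ^ (n (2 * m * p - 1)) *
          q ^ (-(((n (2 * m * p - 1) : ℤ) * ((n (2 * m * p - 1) : ℤ) + 1)) / 2)) *
          (∏ i ∈ (Icc 1 (2 * m * p - 1)).filter (fun i => ¬ m ∣ i),
            ∏ j ∈ Icc (i + 1) (2 * m * p - 1),
              q ^ (epsLO m i j * (n i : ℤ) * (n j : ℤ))) *
          (∏ i ∈ Icc 1 (2 * p - 1),
            (-1 : ℂ) ^ (n (m * i)) *
              q ^ ((-1 : ℤ) ^ i * (N : ℤ) * (n (m * i) : ℤ)
                    + ((n (m * i) : ℤ) * ((n (m * i) : ℤ) + 1)) / 2)) *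
          (∏ i ∈ Icc 1 (2 * m * p - 2),
            q ^ (-((n i : ℤ) * (n (i + 1) : ℤ)) + gamLO m i * (n i : ℤ)) *
              gbin q (n (i + 1)) (n i)) := by
  dsimp only
  rw [mul_sum]
  refine sum_congr rfl fun f hf => ?_
  have hL : 0 < 2 * m * p := by positivity
  refine takata_term_eq hm hp hq hqN _ ?_ ?_ (extTup_lt hN f _)
    fun i hi => extTup_le (mem_filter.1 hf).2 hi
  · simp [extTup]
  · rw [extTup, dif_neg (by omega)]

end
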